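/- arXiv:1110.2351 — 2 statements merged into one kernel-verified Lean document; each statement's English description precedes it below -/
import Mathlib

section
/- For every Jordan curve C in the plane, the complement ℝ² \ C has exactly two connected components, one bounded and one unbounded, and C is the frontier (topological boundary) of each of these components (the Jordan curve theorem). -/
/-!
The proof follows Eilenberg and Borsuk: the topology of the plane enters only through the question
which functions `f : X → ℂ` without zeros have a continuous logarithm.

* The function `(z - q) / (z - p)` has a logarithm off any path from `p` to `q`, since `q` can be
  moved to `p` along the path, but it has none off `{p, q}`. Cut the curve into two arcs from `p` to
  `q`. If the complement of the curve were connected, the logarithms off the two arcs would differ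
  by a constant there and could be glued to a logarithm off `{p, q}`.
* If `U` is a bounded open set and `a ∈ U`, then `z - a` has no logarithm on `frontier U`:
  otherwise its restriction to `Uᶜ` would extend to the plane without zeros, and would have a
  logarithm on a large circle around `a`. On a proper subset of the curve, any function without
  zeros on the curve has a logarithm, so the frontier of a bounded component `U` is the whole
  curve. For the unbounded component `V`, argue with `(closure V)ᶜ` as `U`.
* On the whole curve, a function without zeros is a power of the circle coordinate up to a factor
  with a logarithm. So if `a` and `b` lie in two distinct bounded components `U` and `W`, then some
  `(z - a) ^ n / (z - b) ^ m` with `n ≠ 0` has a logarithm on the curve. As `z - b` has no zeros on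
  `closure U`, the extension argument for `U` again gives a contradiction.
-/

namespace JordanCurve

open Set Metric Topology unitInterval

section ContinuousLog

variable {X Y : Type*} [TopologicalSpace X] [TopologicalSpace Y] {f g : X → ℂ} {s t : Set X}

/-- `f` has a continuous logarithm on `s`; the values outside `s` of the logarithm `L` are
irrelevant. -/
def HasContinuousLogOn (f : X → ℂ) (s : Set X) : Prop :=
  ∃ L : X → ℂ, ContinuousOn L s ∧ ∀ x ∈ s, Complex.exp (L x) = f x

namespace HasContinuousLogOn

theorem mono (hf : HasContinuousLogOn f t) (hst : s ⊆ t) : HasContinuousLogOn f s := by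
  obtain ⟨L, hL, hLf⟩ := hf
  exact ⟨L, hL.mono hst, fun x hx => hLf x (hst hx)⟩

theorem congr (hf : HasContinuousLogOn f s) (hfg : EqOn f g s) : HasContinuousLogOn g s := by
  obtain ⟨L, hL, hLf⟩ := hf
  exact ⟨L, hL, fun x hx => (hLf x hx).trans (hfg hx)⟩

theorem mul (hf : HasContinuousLogOn f s) (hg : HasContinuousLogOn g s) :
    HasContinuousLogOn (fun x => f x * g x) s := by
  obtain ⟨L, hL, hLf⟩ := hf
  obtain ⟨M, hM, hMg⟩ := hg
  exact ⟨fun x => L x + M x, hL.add hM, fun x hx => by rw [Complex.exp_add, hLf x hx, hMg x hx]⟩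

theorem div (hf : HasContinuousLogOn f s) (hg : HasContinuousLogOn g s) :
    HasContinuousLogOn (fun x => f x / g x) s := by
  obtain ⟨L, hL, hLf⟩ := hf
  obtain ⟨M, hM, hMg⟩ := hg
  exact ⟨fun x => L x - M x, hL.sub hM, fun x hx => by rw [Complex.exp_sub, hLf x hx, hMg x hx]⟩

theorem zpow (hf : HasContinuousLogOn f s) (n : ℤ) : HasContinuousLogOn (fun x => f x ^ n) s := by
  obtain ⟨L, hL, hLf⟩ := hf
  exact ⟨fun x => n * L x, continuousOn_const.mul hL,
    fun x hx => by rw [Complex.exp_int_mul, hLf x hx]⟩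

theorem image {F : Y → ℂ} {e : X → Y} (he : IsEmbedding e)
    (hF : HasContinuousLogOn (fun x => F (e x)) s) : HasContinuousLogOn F (e '' s) := by
  obtain ⟨L, hL, hLF⟩ := hF
  refine ⟨Function.extend e L 0, he.isInducing.continuousOn_image_iff.2 ?_, ?_⟩
  · rwa [Function.extend_comp he.injective]
  · rintro _ ⟨x, hx, rfl⟩
    rw [he.injective.extend_apply, hLF x hx]

theorem exists_continuousMap [NormalSpace X] (hf : HasContinuousLogOn f s) (hs : IsClosed s) :
    ∃ L : C(X, ℂ), ∀ x ∈ s, Complex.exp (L x) = f x := by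
  obtain ⟨L, hL, hLf⟩ := hf
  obtain ⟨M, hM⟩ := ContinuousMap.exists_restrict_eq hs ⟨s.domRestrict L, hL.domRestrict⟩
  refine ⟨M, fun x hx => ?_⟩
  rw [← hLf x hx]
  exact congrArg Complex.exp (DFunLike.congr_fun hM ⟨x, hx⟩)

theorem of_homotopy {H : I × X → ℂ} (hH : ContinuousOn H (univ ×ˢ s))
    (hne : ∀ t, ∀ x ∈ s, H (t, x) ≠ 0) (h₀ : HasContinuousLogOn (fun x => H (0, x)) s) :
    HasContinuousLogOn (fun x => H (1, x)) s := by
  obtain ⟨L₀, hL₀, hL₀H⟩ := h₀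
  let H' : C(I × s, {z : ℂ // z ≠ 0}) :=
    ⟨fun p => ⟨H (p.1, p.2), hne p.1 p.2 p.2.2⟩,
      (hH.comp_continuous (by fun_prop) fun p => ⟨mem_univ _, p.2.2⟩).subtype_mk _⟩
  let L := Complex.isCoveringMap_exp.liftHomotopy H' ⟨s.domRestrict L₀, hL₀.domRestrict⟩
    fun x => Subtype.ext (hL₀H x x.2).symm
  have hL : ∀ p, Complex.exp (L p) = H (p.1, p.2) := fun p =>
    congrArg Subtype.val (congrFun (Complex.isCoveringMap_exp.liftHomotopy_lifts H' _ _) p)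
  have hs : HasContinuousLogOn (fun x : s => H (1, (x : X))) univ :=
    ⟨fun x => L (1, x), by fun_prop, fun x _ => hL (1, x)⟩
  simpa only [image_univ, Subtype.range_coe] using
    hs.image (F := fun x => H (1, x)) IsEmbedding.subtypeVal

end HasContinuousLogOn

theorem HasContinuousLogOn.of_starConvex {E : Type*} [AddCommGroup E] [Module ℝ E]
    [TopologicalSpace E] [IsTopologicalAddGroup E] [ContinuousSMul ℝ E] {f : E → ℂ} {s : Set E}
    {x₀ : E} (hs : StarConvex ℝ x₀ s) (hf : ContinuousOn f s) (hne : ∀ x ∈ s, f x ≠ 0) :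
    HasContinuousLogOn f s := by
  have hmem : ∀ t : I, ∀ x ∈ s, x₀ + (t : ℝ) • (x - x₀) ∈ s := fun t x hx =>
    hs.add_smul_sub_mem hx t.2.1 t.2.2
  have h := HasContinuousLogOn.of_homotopy (s := s)
    (H := fun p : I × E => f (x₀ + (p.1 : ℝ) • (p.2 - x₀)))
    (hf.comp (by fun_prop) fun p hp => hmem p.1 p.2 hp.2)
    (fun t x hx => hne _ (hmem t x hx))
    ⟨fun _ => Complex.log (f x₀), continuousOn_const, fun x hx => by
      have hx₀ : x₀ ∈ s := by simpa using hmem 0 x hx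
      simp [Complex.exp_log (hne x₀ hx₀)]⟩
  simpa using h

theorem exists_int_eqOn_of_exp_eqOn (hs : IsPreconnected s)
    (hf : ContinuousOn f s) (hg : ContinuousOn g s)
    (h : ∀ x ∈ s, Complex.exp (f x) = Complex.exp (g x)) :
    ∃ n : ℤ, EqOn f (fun x => g x + n * (2 * Real.pi * Complex.I)) s := by
  rcases s.eq_empty_or_nonempty with rfl | ⟨x₀, hx₀⟩
  · exact ⟨0, eqOn_empty _ _⟩
  obtain ⟨n, hn⟩ := Complex.exp_eq_exp_iff_exists_int.1 (h x₀ hx₀)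
  refine ⟨n, Complex.isCoveringMap_exp.eqOn_of_comp_eqOn hs hf (hg.add continuousOn_const)
    (fun x hx => Subtype.ext ?_) hx₀ hn⟩
  simp only [Function.comp_apply, Complex.exp_add, Complex.exp_int_mul_two_pi_mul_I, mul_one]
  exact h x hx

theorem HasContinuousLogOn.union (hfs : HasContinuousLogOn f s) (hft : HasContinuousLogOn f t)
    (hs : IsOpen s) (ht : IsOpen t) (hst : IsPreconnected (s ∩ t)) :
    HasContinuousLogOn f (s ∪ t) := by
  classical
  obtain ⟨L, hL, hLf⟩ := hfs
  obtain ⟨M, hM, hMf⟩ := hft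
  obtain ⟨n, hn⟩ := exists_int_eqOn_of_exp_eqOn hst (hL.mono inter_subset_left)
    (hM.mono inter_subset_right) fun x hx => (hLf x hx.1).trans (hMf x hx.2).symm
  let M' : X → ℂ := fun x => M x + n * (2 * Real.pi * Complex.I)
  have hglue_s : EqOn (s.piecewise L M') L s := piecewise_eqOn s L M'
  have hglue_t : EqOn (s.piecewise L M') M' t := fun x hx => by
    by_cases hxs : x ∈ s
    · rw [piecewise_eq_of_mem _ _ _ hxs, hn ⟨hxs, hx⟩]
    · rw [piecewise_eq_of_notMem _ _ _ hxs]
  refine ⟨s.piecewise L M', (hL.congr hglue_s).union_of_isOpen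
    ((hM.add continuousOn_const).congr hglue_t) hs ht, ?_⟩
  rintro x (hx | hx)
  · rw [hglue_s hx, hLf x hx]
  · simp only [hglue_t hx, M', Complex.exp_add, Complex.exp_int_mul_two_pi_mul_I, mul_one, hMf x hx]

end ContinuousLog

theorem not_hasContinuousLogOn_zpow_sub_sphere {R : ℝ} (hR : 0 < R) (a : ℂ) {q : ℤ} (hq : q ≠ 0) :
    ¬ HasContinuousLogOn (fun z => (z - a) ^ q) (sphere a R) := by
  rintro ⟨L, hL, hLexp⟩
  have hlog : ∀ t : ℝ, Complex.exp (q * (Real.log R + t * Complex.I)) =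
      (circleMap a R t - a) ^ q := fun t => by
    rw [Complex.exp_int_mul, Complex.exp_add, ← Complex.ofReal_exp, Real.exp_log hR,
      circleMap_sub_center, circleMap_zero]
  have hmem : ∀ t, circleMap a R t ∈ sphere a R := circleMap_mem_sphere a hR.le
  obtain ⟨n, hn⟩ := exists_int_eqOn_of_exp_eqOn isPreconnected_univ
    (f := fun t : ℝ => L (circleMap a R t)) (g := fun t : ℝ => q * (Real.log R + t * Complex.I))
    (hL.comp_continuous (continuous_circleMap a R) hmem).continuousOn (by fun_prop)
    fun t _ => (hLexp _ (hmem t)).trans (hlog t).symm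
  have hperiod : (q : ℂ) * (2 * Real.pi * Complex.I) = 0 := by
    have h₀ := hn (mem_univ 0)
    have h₁ := hn (mem_univ (2 * Real.pi))
    have hcircle : circleMap a R (2 * Real.pi) = circleMap a R 0 := by simp [circleMap]
    simp only [hcircle] at h₁
    push_cast at h₀ h₁
    linear_combination h₀ - h₁
  exact mul_ne_zero (Int.cast_ne_zero.2 hq) Complex.two_pi_I_ne_zero hperiod

theorem not_hasContinuousLogOn_zpow_sub_div_frontier {U : Set ℂ} (hU : IsOpen U)
    (hUb : Bornology.IsBounded U) {a : ℂ} (ha : a ∈ U) {q : ℤ} (hq : q ≠ 0) {φ : ℂ → ℂ}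
    (hφ : ContinuousOn φ (closure U)) (hφ₀ : ∀ z ∈ closure U, φ z ≠ 0) :
    ¬ HasContinuousLogOn (fun z => (z - a) ^ q / φ z) (frontier U) := by
  classical
  intro hlog
  obtain ⟨L, hL⟩ := hlog.exists_continuousMap isClosed_frontier
  have hne : ∀ z ∈ Uᶜ, z - a ≠ 0 := fun z hz h => hz (sub_eq_zero.1 h ▸ ha)
  let k : ℂ → ℂ := U.piecewise (fun z => φ z * Complex.exp (L z)) (fun z => (z - a) ^ q)
  have hk : Continuous k := by
    refine continuous_piecewise (fun z hz => ?_) (hφ.mul (by fun_prop)) ?_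
    · rw [hL z hz, mul_div_cancel₀ _ (hφ₀ z (frontier_subset_closure hz))]
    · rw [hU.isClosed_compl.closure_eq]
      exact ContinuousOn.zpow₀ (by fun_prop) q fun z hz => Or.inl (hne z hz)
  have hk₀ : ∀ z, k z ≠ 0 := fun z => by
    by_cases hz : z ∈ U
    · simpa only [k, piecewise_eq_of_mem _ _ _ hz] using
        mul_ne_zero (hφ₀ z (subset_closure hz)) (Complex.exp_ne_zero _)
    · simpa only [k, piecewise_eq_of_notMem _ _ _ hz] using zpow_ne_zero q (hne z hz)
  have hklog : HasContinuousLogOn k univ :=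
    .of_starConvex (starConvex_univ (0 : ℂ)) hk.continuousOn fun z _ => hk₀ z
  obtain ⟨R, hR₀, hR⟩ := hUb.subset_ball_lt 0 a
  refine not_hasContinuousLogOn_zpow_sub_sphere hR₀ a hq
    ((hklog.mono (subset_univ _)).congr fun z hz => piecewise_eq_of_notMem _ _ _ fun hzU => ?_)
  exact sphere_disjoint_ball.notMem_of_mem_left hz (hR hzU)

theorem not_hasContinuousLogOn_sub_frontier {U : Set ℂ} (hU : IsOpen U)
    (hUb : Bornology.IsBounded U) {a : ℂ} (ha : a ∈ U) :
    ¬ HasContinuousLogOn (fun z => z - a) (frontier U) := by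
  simpa using not_hasContinuousLogOn_zpow_sub_div_frontier hU hUb ha one_ne_zero
    (φ := fun _ => 1) continuousOn_const fun _ _ => one_ne_zero

theorem hasContinuousLogOn_sub_div_sub_compl_range {p q : ℂ} (γ : Path p q) :
    HasContinuousLogOn (fun z => (z - q) / (z - p)) (range γ)ᶜ := by
  have hne : ∀ t, ∀ z ∈ (range γ)ᶜ, z - γ t ≠ 0 := fun t z hz h => hz ⟨t, (sub_eq_zero.1 h).symm⟩
  have hp : ∀ z ∈ (range γ)ᶜ, z - p ≠ 0 := by simpa using hne 0
  have h := HasContinuousLogOn.of_homotopy (s := (range γ)ᶜ)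
    (H := fun x : I × ℂ => (x.2 - γ x.1) / (x.2 - p))
    (ContinuousOn.div (by fun_prop) (by fun_prop) fun x hx => hp x.2 hx.2)
    (fun t z hz => div_ne_zero (hne t z hz) (hp z hz))
    ⟨0, continuousOn_const, fun z hz => by simp [div_self (hp z hz)]⟩
  simpa using h

theorem not_hasContinuousLogOn_sub_div_sub {p q : ℂ} (hpq : p ≠ q) :
    ¬ HasContinuousLogOn (fun z => (z - q) / (z - p)) {p, q}ᶜ := by
  intro hlog
  have hr : 0 < dist p q / 2 := half_pos (dist_pos.2 hpq)
  have hball : sphere p (dist p q / 2) ⊆ ball p (dist p q) :=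
    sphere_subset_ball (half_lt_self (dist_pos.2 hpq))
  have hq : ∀ z ∈ ball p (dist p q), z - q ≠ 0 := by
    intro z hz h
    rw [sub_eq_zero.1 h, mem_ball'] at hz
    exact hz.false
  have hp : ∀ z ∈ sphere p (dist p q / 2), z - p ≠ 0 := fun z hz h =>
    ne_of_mem_sphere hz hr.ne' (sub_eq_zero.1 h)
  have hqlog : HasContinuousLogOn (fun z => z - q) (ball p (dist p q)) :=
    .of_starConvex ((convex_ball p _).starConvex (mem_ball_self (dist_pos.2 hpq)))
      (by fun_prop) hq
  have hsub : sphere p (dist p q / 2) ⊆ {p, q}ᶜ := by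
    rintro z hz (rfl | rfl)
    · exact hp z hz (sub_self z)
    · exact hq z (hball hz) (sub_self z)
  refine not_hasContinuousLogOn_zpow_sub_sphere hr p one_ne_zero
    (((hqlog.mono hball).div (hlog.mono hsub)).congr fun z hz => ?_)
  have := hq z (hball hz)
  simp only [zpow_one, div_div_cancel₀ this]

theorem not_isPreconnected_compl_range_union_range {p q : ℂ} (hpq : p ≠ q) (γ₁ γ₂ : Path p q)
    (h : range γ₁ ∩ range γ₂ ⊆ {p, q}) : ¬ IsPreconnected (range γ₁ ∪ range γ₂)ᶜ := by
  intro hconn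
  have hopen : ∀ γ : Path p q, IsOpen (range γ)ᶜ := fun γ =>
    (isCompact_range γ.continuous).isClosed.isOpen_compl
  rw [compl_union] at hconn
  have hlog := (hasContinuousLogOn_sub_div_sub_compl_range γ₁).union
    (hasContinuousLogOn_sub_div_sub_compl_range γ₂) (hopen γ₁) (hopen γ₂) hconn
  rw [← compl_inter] at hlog
  exact not_hasContinuousLogOn_sub_div_sub hpq (hlog.mono (compl_subset_compl.2 h))

theorem exists_hasContinuousLogOn_div_zpow {f : Circle → ℂ} (hf : Continuous f)
    (hne : ∀ z, f z ≠ 0) : ∃ n : ℤ, HasContinuousLogOn (fun z => f z / (z : ℂ) ^ n) univ := by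
  obtain ⟨L, hL, hLf⟩ := HasContinuousLogOn.of_starConvex (f := fun t => f (Circle.exp t))
    (starConvex_univ (0 : ℝ)) (by fun_prop) fun t _ => hne _
  rw [continuousOn_univ] at hL
  have hshift : ∀ t, Circle.exp (t + 2 * Real.pi) = Circle.exp t := Circle.exp_add_two_pi
  obtain ⟨n, hn⟩ := exists_int_eqOn_of_exp_eqOn isPreconnected_univ
    (f := fun t => L (t + 2 * Real.pi)) (by fun_prop) hL.continuousOn fun t _ => by
      simp only [hLf _ (mem_univ _), hshift]
  let G : C(ℝ, ℂ) := ⟨fun t => L t - n * (t * Complex.I), by fun_prop⟩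
  have hG : Function.Periodic G (2 * Real.pi) := fun t => by
    have := hn (mem_univ t)
    simp only [G, ContinuousMap.coe_mk] at this ⊢
    push_cast
    linear_combination this
  have hquot : IsQuotientMap (Circle.exp : C(ℝ, Circle)) :=
    Circle.isCoveringMap_exp.isQuotientMap Circle.exp_surjective
  have hfactor : Function.FactorsThrough G Circle.exp := fun s t hst => by
    obtain ⟨m, rfl⟩ := Circle.exp_eq_exp.1 hst
    exact hG.int_mul m t
  refine ⟨n, hquot.lift G hfactor, (map_continuous _).continuousOn, fun z _ => ?_⟩
  obtain ⟨t, rfl⟩ := Circle.exp_surjective z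
  have hlift : hquot.lift G hfactor (Circle.exp t) = G t :=
    DFunLike.congr_fun (hquot.lift_comp G hfactor) t
  simp only [hlift, G, ContinuousMap.coe_mk, Complex.exp_sub, Complex.exp_int_mul,
    hLf t (mem_univ t), Circle.coe_exp]

theorem hasContinuousLogOn_coe_compl_singleton (x : Circle) :
    HasContinuousLogOn (fun z : Circle => (z : ℂ)) {x}ᶜ := by
  have hslit : ∀ z ∈ ({x}ᶜ : Set Circle), -(z / x : ℂ) ∈ Complex.slitPlane := by
    intro z hz
    refine Complex.mem_slitPlane_iff_arg.2 ⟨fun harg => hz ?_, by simp⟩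
    have h : -(z / x) = (-1 : Circle) := Circle.injective_arg (by simpa using harg)
    exact div_eq_one.1 (neg_inj.1 h)
  refine ⟨fun z => Complex.log (-(z / x : ℂ)) + Complex.log (-x),
    (ContinuousOn.clog (by fun_prop) hslit).add continuousOn_const, fun z hz => ?_⟩
  rw [Complex.exp_add, Complex.exp_log (Complex.slitPlane_ne_zero (hslit z hz)),
    Complex.exp_log (neg_ne_zero.2 x.coe_ne_zero), neg_mul_neg, div_mul_cancel₀ _ x.coe_ne_zero]

theorem hasContinuousLogOn_compl_singleton {f : Circle → ℂ} (hf : Continuous f)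
    (hne : ∀ z, f z ≠ 0) (x : Circle) : HasContinuousLogOn f {x}ᶜ := by
  obtain ⟨n, hn⟩ := exists_hasContinuousLogOn_div_zpow hf hne
  refine ((hn.mono (subset_univ _)).mul
    ((hasContinuousLogOn_coe_compl_singleton x).zpow n)).congr fun z _ => ?_
  exact div_mul_cancel₀ _ (zpow_ne_zero n z.coe_ne_zero)

section ConnectedComponent

theorem disjoint_connectedComponentIn {X : Type*} [TopologicalSpace X] {F : Set X} {x y : X}
    (hy : y ∉ connectedComponentIn F x) :
    Disjoint (connectedComponentIn F x) (connectedComponentIn F y) := by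
  rw [disjoint_left]
  intro z hzx hzy
  rw [connectedComponentIn_eq hzx, ← connectedComponentIn_eq hzy] at hy
  exact hy (mem_connectedComponentIn (connectedComponentIn_nonempty_iff.1 ⟨z, hzy⟩))

theorem frontier_connectedComponentIn_subset_compl {X : Type*} [TopologicalSpace X]
    [LocallyConnectedSpace X] {F : Set X} (hF : IsOpen F) (x : X) :
    frontier (connectedComponentIn F x) ⊆ Fᶜ := by
  intro y hy hyF
  rw [hF.connectedComponentIn.frontier_eq] at hy
  exact disjoint_left.1 ((disjoint_connectedComponentIn hy.2).closure_left hF.connectedComponentIn)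
    hy.1 (mem_connectedComponentIn hyF)

variable {E : Type*} [NormedAddCommGroup E] [NormedSpace ℝ E]

theorem isPreconnected_compl_closedBall_of_one_lt_rank (hE : 1 < Module.rank ℝ E) (x : E) {R : ℝ}
    (hR : 0 ≤ R) : IsPreconnected (closedBall x R)ᶜ := by
  have hpolar : (closedBall x R)ᶜ =
      (fun p : ℝ × E => x + p.1 • p.2) '' (Ioi R ×ˢ sphere 0 1) := by
    ext y
    simp only [mem_compl_iff, mem_closedBall, not_le, dist_eq_norm]
    constructor
    · intro hy
      have hy₀ : ‖y - x‖ ≠ 0 := (hR.trans_lt hy).ne'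
      refine ⟨(‖y - x‖, ‖y - x‖⁻¹ • (y - x)), ⟨hy, ?_⟩, ?_⟩
      · simp [norm_smul, hy₀]
      · simp [smul_smul, hy₀]
    · rintro ⟨⟨r, u⟩, ⟨hr, hu⟩, rfl⟩
      rw [mem_sphere_zero_iff_norm] at hu
      simpa [norm_smul, hu, abs_of_pos (hR.trans_lt hr)] using hr
  rw [hpolar]
  exact (isPreconnected_Ioi.prod (isPreconnected_sphere hE 0 1)).image _ (by fun_prop)

theorem exists_isBounded_compl_connectedComponentIn_compl (hE : 1 < Module.rank ℝ E) {K : Set E}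
    (hK : Bornology.IsBounded K) :
    ∃ w ∈ Kᶜ, Bornology.IsBounded (connectedComponentIn Kᶜ w)ᶜ := by
  have : Nontrivial E := rank_pos_iff_nontrivial.1 (zero_lt_one.trans hE)
  obtain ⟨R, hR₀, hR⟩ := hK.subset_closedBall_lt 0 0
  obtain ⟨w, hw⟩ := NormedSpace.exists_lt_norm ℝ E R
  have hwball : w ∈ (closedBall 0 R)ᶜ := by simpa using hw
  have hball : (closedBall 0 R)ᶜ ⊆ connectedComponentIn Kᶜ w :=
    (isPreconnected_compl_closedBall_of_one_lt_rank hE 0 hR₀.le).subset_connectedComponentIn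
      hwball (compl_subset_compl.2 hR)
  exact ⟨w, compl_subset_compl.2 hR hwball,
    isBounded_closedBall.subset (compl_subset_comm.1 hball)⟩

end ConnectedComponent

section Circle

variable {γ : Circle → ℂ} (hγ : Continuous γ) (hinj : Function.Injective γ)

include hγ hinj

theorem not_isPreconnected_compl_range : ¬ IsPreconnected (range γ)ᶜ := by
  have hne : (1 : Circle) ≠ -1 := by
    rw [Ne, Circle.ext_iff]
    norm_num
  let α := (Circle.path 1 (-1)).map hγ
  let β := (Circle.path (-1) 1).symm.map hγ
  have hα : range α = γ '' range (Circle.path 1 (-1)) := by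
    simp only [α, Path.map_coe, range_comp]
  have hβ : range β = γ '' range (Circle.path (-1) 1) := by
    simp only [β, Path.map_coe, range_comp, Path.symm_range]
  have hunion : range α ∪ range β = range γ := by
    rw [hα, hβ, ← image_union, Circle.range_path_union_range_path hne, image_univ]
  have hinter : range α ∩ range β = {γ 1, γ (-1)} := by
    rw [hα, hβ, ← image_inter hinj, Circle.range_path_inter_range_path hne, image_pair]
  rw [← hunion]
  exact not_isPreconnected_compl_range_union_range (hinj.ne hne) α β hinter.subset

theorem range_subset_frontier {U : Set ℂ} (hU : IsOpen U) (hUb : Bornology.IsBounded U)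
    (hfr : frontier U ⊆ range γ) {a : ℂ} (haU : a ∈ U) (haγ : a ∉ range γ) :
    range γ ⊆ frontier U := by
  rintro _ ⟨x, rfl⟩
  by_contra hx
  have hfr' : frontier U ⊆ γ '' {x}ᶜ := by
    intro z hz
    obtain ⟨y, rfl⟩ := hfr hz
    exact mem_image_of_mem γ fun hyx => hx (hyx ▸ hz)
  have hlog : HasContinuousLogOn (fun y => γ y - a) {x}ᶜ :=
    hasContinuousLogOn_compl_singleton (by fun_prop)
      (fun y h => haγ ⟨y, sub_eq_zero.1 h⟩) x
  exact not_hasContinuousLogOn_sub_frontier hU hUb haU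
    ((hlog.image (F := fun z => z - a) (hγ.isClosedEmbedding hinj).isEmbedding).mono hfr')

theorem range_subset_frontier_of_isBounded_compl {V : Set ℂ} (hVb : Bornology.IsBounded Vᶜ)
    (hfr : frontier V ⊆ range γ) {a : ℂ} (haV : a ∉ closure V) (haγ : a ∉ range γ) :
    range γ ⊆ frontier V := by
  have hsub : frontier (closure V)ᶜ ⊆ frontier V := by
    rw [frontier_compl]
    exact frontier_closure_subset
  exact (range_subset_frontier hγ hinj isClosed_closure.isOpen_compl
    (hVb.subset (compl_subset_compl.2 subset_closure)) (hsub.trans hfr) haV haγ).trans hsub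

theorem not_disjoint_of_frontier_subset_range {U W : Set ℂ} (hU : IsOpen U) (hW : IsOpen W)
    (hUb : Bornology.IsBounded U) (hWb : Bornology.IsBounded W) (hfU : frontier U ⊆ range γ)
    (hfW : frontier W ⊆ range γ) {a b : ℂ} (haU : a ∈ U) (hbW : b ∈ W) (haγ : a ∉ range γ)
    (hbγ : b ∉ range γ) : ¬ Disjoint U W := by
  intro hUW
  have hemb : IsEmbedding γ := (hγ.isClosedEmbedding hinj).isEmbedding
  have hne : ∀ c ∉ range γ, ∀ x, γ x - c ≠ 0 := fun c hc x h => hc ⟨x, sub_eq_zero.1 h⟩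
  obtain ⟨m, hm⟩ := exists_hasContinuousLogOn_div_zpow (f := fun x => γ x - a) (by fun_prop)
    (hne a haγ)
  obtain ⟨n, hn⟩ := exists_hasContinuousLogOn_div_zpow (f := fun x => γ x - b) (by fun_prop)
    (hne b hbγ)
  have hn₀ : n ≠ 0 := by
    rintro rfl
    have hlog : HasContinuousLogOn (fun x => γ x - b) univ := by simpa using hn
    have hlog' := hlog.image (F := fun z => z - b) hemb
    rw [image_univ] at hlog'
    exact not_hasContinuousLogOn_sub_frontier hW hWb hbW (hlog'.mono hfW)
  have hlog : HasContinuousLogOn (fun x => (γ x - a) ^ n / (γ x - b) ^ m) univ :=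
    ((hm.zpow n).div (hn.zpow m)).congr fun x _ => by
      simp only [div_zpow, ← zpow_mul, mul_comm n m]
      exact div_div_div_cancel_right₀ (zpow_ne_zero _ x.coe_ne_zero) _ _
  have hlog' := hlog.image (F := fun z => (z - a) ^ n / (z - b) ^ m) hemb
  rw [image_univ] at hlog'
  have hb : ∀ z ∈ closure U, z - b ≠ 0 := fun z hz h =>
    disjoint_left.1 (hUW.closure_left hW) hz (sub_eq_zero.1 h ▸ hbW)
  exact not_hasContinuousLogOn_zpow_sub_div_frontier hU hUb haU hn₀
    (ContinuousOn.zpow₀ (by fun_prop) m fun z hz => Or.inl (hb z hz))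
    (fun z hz => zpow_ne_zero m (hb z hz)) (hlog'.mono hfU)

theorem exists_components_compl_range : ∃ U V : Set ℂ,
    IsOpen U ∧ IsOpen V ∧ IsConnected U ∧ IsConnected V ∧
    Disjoint U V ∧ U ∪ V = (range γ)ᶜ ∧
    Bornology.IsBounded U ∧ ¬ Bornology.IsBounded V ∧
    frontier U = range γ ∧ frontier V = range γ := by
  have hcompact : IsCompact (range γ) := isCompact_range hγ
  have hopen : IsOpen (range γ)ᶜ := hcompact.isClosed.isOpen_compl
  have hfr : ∀ x, frontier (connectedComponentIn (range γ)ᶜ x) ⊆ range γ := fun x => by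
    simpa using frontier_connectedComponentIn_subset_compl hopen x
  obtain ⟨w, hw, hVb⟩ := exists_isBounded_compl_connectedComponentIn_compl
    (by simp [Complex.rank_real_complex]) hcompact.isBounded
  set V := connectedComponentIn (range γ)ᶜ w
  have hVconn : IsConnected V := isConnected_connectedComponentIn_iff.2 hw
  have hVunbdd : ¬ Bornology.IsBounded V := fun h =>
    NormedSpace.unbounded_univ ℝ ℂ (union_compl_self V ▸ h.union hVb)
  have hbdd : ∀ W, Disjoint V W → Bornology.IsBounded W := fun W hW =>
    hVb.subset hW.subset_compl_left
  obtain ⟨a, haγ, haV⟩ : ∃ a ∈ (range γ)ᶜ, a ∉ V := by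
    by_contra! hsub
    exact not_isPreconnected_compl_range hγ hinj
      ((connectedComponentIn_subset _ w).antisymm hsub ▸ hVconn.isPreconnected)
  set U := connectedComponentIn (range γ)ᶜ a
  have hVU : Disjoint V U := disjoint_connectedComponentIn haV
  have haU : a ∈ U := mem_connectedComponentIn haγ
  have hU : IsOpen U := hopen.connectedComponentIn
  refine ⟨U, V, hU, hopen.connectedComponentIn, isConnected_connectedComponentIn_iff.2 haγ,
    hVconn, hVU.symm, ?_, hbdd U hVU, hVunbdd, ?_, ?_⟩
  · refine (union_subset (connectedComponentIn_subset _ a)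
      (connectedComponentIn_subset _ w)).antisymm fun b hbγ => ?_
    by_contra hb
    rw [mem_union, not_or] at hb
    exact not_disjoint_of_frontier_subset_range hγ hinj hU hopen.connectedComponentIn (hbdd U hVU)
      (hbdd _ (disjoint_connectedComponentIn hb.2)) (hfr a) (hfr b) haU
      (mem_connectedComponentIn hbγ) haγ hbγ (disjoint_connectedComponentIn hb.1)
  · exact (hfr a).antisymm (range_subset_frontier hγ hinj hU (hbdd U hVU) (hfr a) haU haγ)
  · exact (hfr w).antisymm (range_subset_frontier_of_isBounded_compl hγ hinj hVb (hfr w)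
      (disjoint_right.1 (hVU.closure_left hU) haU) haγ)

end Circle

end JordanCurve

/-- **The Jordan curve theorem.** If `C` is a Jordan curve in the plane (the image of a
continuous injective map from the unit circle into `ℝ²`), then the complement of `C` has
exactly two connected components: there are two disjoint nonempty open connected sets
`U` and `V` whose union is `ℝ² \ C`, with `U` bounded and `V` unbounded, and `C` is the
frontier of each of them. -/
theorem jordan_curve_theorem (C : Set (EuclideanSpace ℝ (Fin 2)))
    (f : Metric.sphere (0 : EuclideanSpace ℝ (Fin 2)) 1 → EuclideanSpace ℝ (Fin 2))
    (hf : Continuous f) (hinj : Function.Injective f) (hC : C = Set.range f) :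
    ∃ U V : Set (EuclideanSpace ℝ (Fin 2)),
      IsOpen U ∧ IsOpen V ∧ IsConnected U ∧ IsConnected V ∧
      Disjoint U V ∧ U ∪ V = Cᶜ ∧
      Bornology.IsBounded U ∧ ¬ Bornology.IsBounded V ∧
      frontier U = C ∧ frontier V = C := by
  let Φ : ℂ ≃ₗᵢ[ℝ] EuclideanSpace ℝ (Fin 2) := Complex.orthonormalBasisOneI.repr
  let h : ℂ ≃ₜ EuclideanSpace ℝ (Fin 2) := Φ.toHomeomorph
  let j : Circle ≃ₜ Metric.sphere (0 : EuclideanSpace ℝ (Fin 2)) 1 :=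
    h.subtype fun z => by simp [h, Submonoid.unitSphere]
  have hrange : h '' Set.range (Φ.symm ∘ f ∘ j) = C := by
    rw [← Set.range_comp, hC, ← j.surjective.range_comp f]
    congr 1
    ext1 z
    exact Φ.apply_symm_apply _
  obtain ⟨U, V, hU, hV, hUc, hVc, hUV, hunion, hUb, hVb, hfU, hfV⟩ :=
    JordanCurve.exists_components_compl_range (γ := Φ.symm ∘ f ∘ j)
      (Φ.symm.continuous.comp (hf.comp j.continuous))
      (Φ.symm.injective.comp (hinj.comp j.injective))
  refine ⟨h '' U, h '' V, h.isOpenMap U hU, h.isOpenMap V hV,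
    hUc.image h h.continuous.continuousOn, hVc.image h h.continuous.continuousOn,
    (Set.disjoint_image_iff h.injective).2 hUV, ?_, Φ.lipschitz.isBounded_image hUb,
    fun hb => hVb ?_, ?_, ?_⟩
  · rw [← Set.image_union, hunion, Set.image_compl_eq h.bijective, hrange]
  · rw [← Set.preimage_image_eq V h.injective]
    exact Φ.antilipschitz.isBounded_preimage hb
  · rw [← h.image_frontier, hfU, hrange]
  · rw [← h.image_frontier, hfV, hrange]
end

section
/- Let n ≥ 2 and let Σ be the image of a continuous injective map from the unit sphere S^{n-1} = {x ∈ ℝⁿ : |x| = 1} into ℝⁿ. Then the complement ℝⁿ \ Σ has exactly two connected components, one bounded and one unbounded, and Σ is the frontier (topological boundary) of each of these components (the Jordan–Brouwer separation theorem). -/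
/-!
The complement of a compact set `K ⊆ ℝⁿ` is studied through the mod 2 homology of possibly infinite
cubical chains that miss `K`, on finer and finer dyadic grids. As chains may run off to infinity, a
vertex in an unbounded component of the complement bounds a ray, so homology in degree `0` counts
bounded components only.

Slicing by a linear functional, Mayer–Vietoris and compactness show, by induction on the dimension,
that the complement of an injective image of a compact convex set has no homology at all. Splitting
a sphere into two hemispheres, which meet in a sphere of one dimension less, then shows that the
complement of an embedded `(k - 1)`-sphere has a single homology class, in degree `n - k`. For
`k = n` this gives exactly one bounded component.

A proper closed part of the sphere lies in an embedded disc. If the frontier of one of the two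
components were such a part, the complement of the disc would have a bounded component, hence
nonzero homology in degree `0`.
-/

/-- Mod 2 cubical chains, possibly infinite, on the grid `ℤⁿ`: a coordinate `2 * a` of an index
stands for the point `a`, a coordinate `2 * a + 1` for the interval `[a, a + 1]`. -/
abbrev CubicalChain (n : ℕ) := (Fin n → ℤ) → ZMod 2

namespace CubicalChain

open Filter Function Set Topology

variable {n : ℕ}

/-- The summand of the mod 2 boundary that takes the two faces in direction `i`. -/
def partialBoundary (i : Fin n) : Module.End (ZMod 2) (CubicalChain n) where
  toFun c w := if Even (w i) then c (update w i (w i + 1)) + c (update w i (w i - 1)) else 0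
  map_add' a b := by
    ext w
    simp only [Pi.add_apply]
    split_ifs <;> ring
  map_smul' r c := by
    ext w
    simp [mul_add]

lemma partialBoundary_apply (i : Fin n) (c : CubicalChain n) (w : Fin n → ℤ) :
    partialBoundary i c w =
      if Even (w i) then c (update w i (w i + 1)) + c (update w i (w i - 1)) else 0 :=
  rfl

lemma partialBoundary_mul_self (i : Fin n) :
    partialBoundary i * partialBoundary i = 0 := by
  ext c w
  have hodd : Even (w i) → ¬ Even (w i + 1) ∧ ¬ Even (w i - 1) := by grind
  simp only [Module.End.mul_apply, partialBoundary_apply, update_self, LinearMap.zero_apply,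
    Pi.zero_apply]
  split_ifs with h <;> simp_all

lemma commute_partialBoundary (i j : Fin n) :
    Commute (partialBoundary i) (partialBoundary j) := by
  obtain rfl | hij := eq_or_ne i j
  · exact Commute.refl _
  ext c w
  simp only [Module.End.mul_apply, partialBoundary_apply, update_of_ne hij.symm,
    update_of_ne hij, update_comm hij]
  split_ifs <;> ring

/-- The mod 2 cellular boundary. -/
def boundary : Module.End (ZMod 2) (CubicalChain n) := ∑ i, partialBoundary i

lemma boundary_apply (c : CubicalChain n) (w : Fin n → ℤ) :
    boundary c w = ∑ i, partialBoundary i c w := by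
  simp [boundary, LinearMap.sum_apply, Finset.sum_apply]

@[simp]
lemma boundary_boundary (c : CubicalChain n) : boundary (boundary c) = 0 := by
  suffices h : (boundary : Module.End (ZMod 2) (CubicalChain n)) * boundary = 0 from
    LinearMap.congr_fun h c
  rw [boundary, Finset.sum_mul_sum, ← Finset.sum_product']
  refine Finset.sum_involution (fun p _ ↦ (p.2, p.1)) (fun p _ ↦ ?_) (fun p _ hp hswap ↦ hp ?_)
    (by simp) (by simp)
  · rw [(commute_partialBoundary p.1 p.2).eq]
    exact ZModModule.add_self _
  · rw [show p.2 = p.1 from congrArg Prod.fst hswap]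
    exact partialBoundary_mul_self _

/-- `w` is a codimension-one face of `w'`. -/
def IsFacet (w w' : Fin n → ℤ) : Prop :=
  ∃ i z, Even (w i) ∧ (z = w i + 1 ∨ z = w i - 1) ∧ w' = update w i z

lemma boundary_congr {c c' : CubicalChain n} {w : Fin n → ℤ}
    (h : ∀ w', IsFacet w w' → c w' = c' w') : boundary c w = boundary c' w := by
  simp only [boundary_apply, partialBoundary_apply]
  refine Finset.sum_congr rfl fun i _ ↦ ?_
  split_ifs with hi
  · rw [h _ ⟨i, _, hi, .inl rfl, rfl⟩, h _ ⟨i, _, hi, .inr rfl, rfl⟩]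
  · rfl

/-- The chains that vanish outside `T`. -/
def supported (T : Set (Fin n → ℤ)) : Submodule (ZMod 2) (CubicalChain n) :=
  Submodule.pi Tᶜ fun _ ↦ ⊥

lemma mem_supported {T : Set (Fin n → ℤ)} {c : CubicalChain n} :
    c ∈ supported T ↔ ∀ w ∉ T, c w = 0 := by
  simp [supported, Submodule.mem_pi]

lemma supported_mono {T T' : Set (Fin n → ℤ)} (h : T ⊆ T') : supported T ≤ supported T' :=
  fun _ hc ↦ mem_supported.2 fun w hw ↦ mem_supported.1 hc w (notMem_subset h hw)

lemma supported_inter (T T' : Set (Fin n → ℤ)) :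
    supported (T ∩ T') = supported T ⊓ supported T' := by
  ext c
  simp only [Submodule.mem_inf, mem_supported, mem_inter_iff]
  grind

lemma indicator_mem_supported_inter {T T' : Set (Fin n → ℤ)} {c : CubicalChain n}
    (hc : c ∈ supported T') : indicator T c ∈ supported (T ∩ T') := by
  refine mem_supported.2 fun w hw ↦ indicator_apply_eq_zero.2 fun hT ↦ ?_
  exact mem_supported.1 hc w fun hT' ↦ hw ⟨hT, hT'⟩

lemma boundary_mem_supported {T T' : Set (Fin n → ℤ)}
    (h : ∀ w w', IsFacet w w' → w' ∈ T → w ∈ T') {c : CubicalChain n} (hc : c ∈ supported T) :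
    boundary c ∈ supported T' :=
  mem_supported.2 fun w hw ↦
    (boundary_congr fun w' hw' ↦ mem_supported.1 hc w' fun hT ↦ hw (h w w' hw' hT)).trans
      (congrFun (map_zero boundary) w)

/-- The one-dimensional part of subdivision: which cell of the original grid contains a given
cell of the grid of half the mesh. -/
def parent (z : ℤ) : ℤ := if z % 2 = 0 then z / 2 else 2 * (z / 4) + 1

lemma parent_comp_update (w : Fin n → ℤ) (i : Fin n) (z : ℤ) :
    parent ∘ update w i z = update (parent ∘ w) i (parent z) :=
  comp_update _ _ _ _

lemma even_parent {z : ℤ} (hz : z % 4 ≠ 2) : Even (parent z) ↔ Even z := by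
  grind [parent]

/-- A fine cell has the dimension of its parent exactly if no coordinate is `2` modulo `4`, that
is, a newly introduced midpoint. -/
def IsFullInParent (w : Fin n → ℤ) : Prop := ∀ i, w i % 4 ≠ 2

instance (w : Fin n → ℤ) : Decidable (IsFullInParent w) := inferInstanceAs (Decidable (∀ _, _))

lemma isFullInParent_update {w : Fin n → ℤ} {i : Fin n} {z : ℤ} :
    IsFullInParent (update w i z) ↔ z % 4 ≠ 2 ∧ ∀ j ≠ i, w j % 4 ≠ 2 := by
  rw [IsFullInParent, forall_update_iff w fun _ x ↦ x % 4 ≠ 2]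

/-- Subdivision of a chain to the grid of half the mesh. -/
def subdivide : Module.End (ZMod 2) (CubicalChain n) where
  toFun c w := if IsFullInParent w then c (parent ∘ w) else 0
  map_add' a b := by
    ext w
    simp only [Pi.add_apply]
    split_ifs <;> simp
  map_smul' r c := by
    ext w
    simp

lemma subdivide_apply (c : CubicalChain n) (w : Fin n → ℤ) :
    subdivide c w = if IsFullInParent w then c (parent ∘ w) else 0 :=
  rfl

lemma commute_partialBoundary_subdivide (i : Fin n) :
    Commute (partialBoundary i) subdivide := by
  ext c w
  have hw : IsFullInParent w ↔ w i % 4 ≠ 2 ∧ ∀ j ≠ i, w j % 4 ≠ 2 := by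
    rw [← isFullInParent_update, update_eq_self]
  simp only [Module.End.mul_apply, partialBoundary_apply, subdivide_apply, hw,
    isFullInParent_update, parent_comp_update, comp_apply]
  by_cases hrest : ∀ j ≠ i, w j % 4 ≠ 2
  swap
  · simp only [hrest, and_false, if_false, add_zero, ite_self]
  by_cases he : Even (w i)
  swap
  · have : ¬ Even (parent (w i)) := by grind [parent]
    simp [he, this]
  have hup : (w i + 1) % 4 ≠ 2 := by grind
  have hdown : (w i - 1) % 4 ≠ 2 := by grind
  by_cases hmid : w i % 4 = 2
  · have : parent (w i + 1) = parent (w i - 1) := by grind [parent]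
    simp [he, hup, hdown, hmid, this, CharTwo.add_self_eq_zero]
  · have hparent_up : parent (w i + 1) = parent (w i) + 1 := by grind [parent]
    have hparent_down : parent (w i - 1) = parent (w i) - 1 := by grind [parent]
    have := (even_parent hmid).2 he
    simp only [he, hup, hdown, hmid, hparent_up, hparent_down, this, if_true, ne_eq,
      not_false_eq_true, true_and]
    simp only [eq_true hrest, if_true]

lemma commute_boundary_subdivide_pow (k : ℕ) :
    Commute (boundary : Module.End (ZMod 2) (CubicalChain n)) (subdivide ^ k) :=
  (Commute.sum_left _ _ _ fun i _ ↦ commute_partialBoundary_subdivide i).pow_right k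

lemma boundary_subdivide_pow (k : ℕ) (c : CubicalChain n) :
    boundary ((subdivide ^ k) c) = (subdivide ^ k) (boundary c) :=
  LinearMap.congr_fun (commute_boundary_subdivide_pow k) c

lemma subdivide_pow_add (k l : ℕ) (c : CubicalChain n) :
    (subdivide ^ (k + l)) c = (subdivide ^ l) ((subdivide ^ k) c) := by
  rw [add_comm, pow_add, Module.End.mul_apply]

lemma subdivide_mem_supported {T T' : Set (Fin n → ℤ)}
    (h : ∀ w, IsFullInParent w → parent ∘ w ∈ T → w ∈ T') {c : CubicalChain n}
    (hc : c ∈ supported T) : subdivide c ∈ supported T' := by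
  refine mem_supported.2 fun w hw ↦ ?_
  rw [subdivide_apply]
  split_ifs with hfull
  · exact mem_supported.1 hc _ fun hT ↦ hw (h w hfull hT)
  · rfl

/-- The dimension of a cell. -/
def dim (w : Fin n → ℤ) : ℕ := (Finset.univ.filter fun i ↦ ¬ Even (w i)).card

/-- The chains of dimension `d`. -/
def homogeneous (n d : ℕ) : Submodule (ZMod 2) (CubicalChain n) := supported {w | dim w = d}

lemma dim_update {w : Fin n → ℤ} {i : Fin n} {z : ℤ} (hi : Even (w i)) (hz : ¬ Even z) :
    dim (update w i z) = dim w + 1 := by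
  have : (Finset.univ.filter fun j ↦ ¬ Even (update w i z j)) =
      insert i (Finset.univ.filter fun j ↦ ¬ Even (w j)) := by
    ext j
    obtain rfl | hj := eq_or_ne j i
    · simpa using hz
    · simp [hj]
  rw [dim, this, Finset.card_insert_of_notMem (by simp [hi]), dim]

lemma IsFacet.dim_eq {w w' : Fin n → ℤ} (h : IsFacet w w') : dim w' = dim w + 1 := by
  obtain ⟨i, z, hi, hz, rfl⟩ := h
  exact dim_update hi (by grind)

lemma boundary_mem_homogeneous {d : ℕ} {c : CubicalChain n} (hc : c ∈ homogeneous n (d + 1)) :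
    boundary c ∈ homogeneous n d :=
  boundary_mem_supported (fun _ _ hw hdim ↦ Nat.succ_injective (hw.dim_eq.symm.trans hdim)) hc

lemma subdivide_pow_mem_homogeneous {d : ℕ} {c : CubicalChain n} (hc : c ∈ homogeneous n d)
    (k : ℕ) : (subdivide ^ k) c ∈ homogeneous n d := by
  refine Module.End.pow_apply subdivide k c ▸ MapsTo.iterate (fun c hc ↦ ?_) k hc
  refine subdivide_mem_supported (fun w hfull hdim ↦ ?_) hc
  have : (fun i ↦ ¬ Even ((parent ∘ w) i)) = fun i ↦ ¬ Even (w i) :=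
    funext fun i ↦ propext (even_parent (hfull i)).not
  simpa only [mem_ofPred_eq, dim, this] using hdim

/-- The point with coordinates `v i` on the grid of mesh `2 ^ (-m)`. -/
noncomputable def gridPoint (m : ℕ) (v : Fin n → ℤ) : Fin n → ℝ := fun i ↦ v i / 2 ^ m

lemma gridPoint_add_two_pow_mul (m k : ℕ) (v : Fin n → ℤ) :
    gridPoint (m + k) (2 ^ k * v) = gridPoint m v := by
  ext i
  simp only [gridPoint, Pi.mul_apply, Pi.pow_apply, Pi.ofNat_apply]
  push_cast
  field_simp
  ring

/-- The closed cell of the grid of mesh `2 ^ (-m)` with index `w`. -/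
noncomputable def cell (m : ℕ) (w : Fin n → ℤ) : Set (Fin n → ℝ) :=
  Icc (gridPoint m (w / 2)) (gridPoint m ((w + 1) / 2))

lemma mem_cell {m : ℕ} {w : Fin n → ℤ} {x : Fin n → ℝ} :
    x ∈ cell m w ↔
      ∀ i, ((w i / 2 : ℤ) : ℝ) ≤ 2 ^ m * x i ∧ 2 ^ m * x i ≤ ((w i + 1) / 2 : ℤ) := by
  have hm : (0 : ℝ) < 2 ^ m := by positivity
  simp only [cell, mem_Icc, Pi.le_def, gridPoint, div_le_iff₀' hm, le_div_iff₀' hm, forall_and,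
    Pi.div_apply, Pi.add_apply, Pi.ofNat_apply]

lemma isClosed_cell (m : ℕ) (w : Fin n → ℤ) : IsClosed (cell m w) := isClosed_Icc

lemma dist_le_of_mem_cell {m : ℕ} {w : Fin n → ℤ} {x y : Fin n → ℝ} (hx : x ∈ cell m w)
    (hy : y ∈ cell m w) : dist x y ≤ (1 / 2) ^ m := by
  refine (dist_pi_le_iff (by positivity)).2 fun i ↦ ?_
  have hm : (0 : ℝ) < 2 ^ m := by positivity
  obtain ⟨hx₁, hx₂⟩ := mem_cell.1 hx i
  obtain ⟨hy₁, hy₂⟩ := mem_cell.1 hy i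
  have hlen : (((w i + 1) / 2 : ℤ) : ℝ) ≤ (w i / 2 : ℤ) + 1 := by
    exact_mod_cast (by omega : (w i + 1) / 2 ≤ w i / 2 + 1)
  rw [one_div_pow, Real.dist_eq, le_div_iff₀ hm, ← abs_of_pos hm, ← abs_mul, abs_le]
  constructor <;> nlinarith

lemma IsFacet.cell_subset {w w' : Fin n → ℤ} (h : IsFacet w w') (m : ℕ) :
    cell m w ⊆ cell m w' := by
  obtain ⟨i, z, hi, hz, rfl⟩ := h
  intro x hx
  rw [mem_cell] at hx ⊢
  intro j
  obtain rfl | hj := eq_or_ne j i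
  · have hleft : ((z / 2 : ℤ) : ℝ) ≤ (w j / 2 : ℤ) := by exact_mod_cast (by grind)
    have hright : (((w j + 1) / 2 : ℤ) : ℝ) ≤ ((z + 1) / 2 : ℤ) := by exact_mod_cast (by grind)
    rw [update_self]
    exact ⟨hleft.trans (hx j).1, (hx j).2.trans hright⟩
  · simpa [hj] using hx j

lemma cell_subset_cell_parent (m : ℕ) (w : Fin n → ℤ) :
    cell (m + 1) w ⊆ cell m (parent ∘ w) := by
  intro x hx
  rw [mem_cell] at hx ⊢
  intro i
  have hleft : (2 : ℝ) * (parent (w i) / 2 : ℤ) ≤ (w i / 2 : ℤ) := by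
    exact_mod_cast (by grind [parent] : 2 * (parent (w i) / 2) ≤ w i / 2)
  have hright : (((w i + 1) / 2 : ℤ) : ℝ) ≤ 2 * ((parent (w i) + 1) / 2 : ℤ) := by
    exact_mod_cast (by grind [parent] : (w i + 1) / 2 ≤ 2 * ((parent (w i) + 1) / 2))
  obtain ⟨h₁, h₂⟩ := hx i
  rw [pow_succ] at h₁ h₂
  constructor <;> simp only [comp_apply] <;> linarith

lemma finite_setOf_not_disjoint_cell (m : ℕ) {A : Set (Fin n → ℝ)} (hA : Bornology.IsBounded A) :
    {w : Fin n → ℤ | ¬ Disjoint (cell m w) A}.Finite := by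
  obtain ⟨R, hR⟩ := hA.subset_closedBall 0
  obtain ⟨N, hN⟩ := exists_nat_gt (2 ^ m * R)
  have hm : (0 : ℝ) < 2 ^ m := by positivity
  suffices h : ∀ w, ¬ Disjoint (cell m w) A → ∀ i, -(2 * N + 2) ≤ w i ∧ w i ≤ 2 * N + 2 from
    (finite_Icc (fun _ ↦ (-(2 * N + 2) : ℤ)) fun _ ↦ (2 * N + 2 : ℤ)).subset fun w hw ↦
      ⟨fun i ↦ (h w hw i).1, fun i ↦ (h w hw i).2⟩
  intro w hw i
  obtain ⟨x, hx, hxA⟩ := not_disjoint_iff.1 hw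
  obtain ⟨hxR₁, hxR₂⟩ := abs_le.1 ((norm_le_pi_norm x i).trans (mem_closedBall_zero_iff.1 (hR hxA)))
  obtain ⟨hx₁, hx₂⟩ := mem_cell.1 hx i
  have hlow : w i / 2 < N := by exact_mod_cast (by nlinarith : ((w i / 2 : ℤ) : ℝ) < N)
  have hhigh : (-N : ℤ) < (w i + 1) / 2 := by
    exact_mod_cast (by nlinarith : (-N : ℝ) < ((w i + 1) / 2 : ℤ))
  omega

lemma locallyFinite_cell (m : ℕ) : LocallyFinite fun w : Fin n → ℤ ↦ cell m w := fun x ↦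
  ⟨_, Metric.ball_mem_nhds x one_pos, by
    simpa only [not_disjoint_iff_nonempty_inter] using
      finite_setOf_not_disjoint_cell m (Metric.isBounded_ball (x := x) (r := 1))⟩

/-- The chains on the grid of mesh `2 ^ (-m)` all of whose cells miss `K`. -/
noncomputable def chainsOff (m : ℕ) (K : Set (Fin n → ℝ)) : Submodule (ZMod 2) (CubicalChain n) :=
  supported {w | Disjoint (cell m w) K}

lemma mem_chainsOff {m : ℕ} {K : Set (Fin n → ℝ)} {c : CubicalChain n} :
    c ∈ chainsOff m K ↔ ∀ w, c w ≠ 0 → Disjoint (cell m w) K := by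
  simp only [chainsOff, mem_supported, mem_ofPred_eq, not_imp_comm, ne_eq]

lemma chainsOff_anti (m : ℕ) {K L : Set (Fin n → ℝ)} (h : K ⊆ L) :
    chainsOff m L ≤ chainsOff m K :=
  supported_mono fun _ hw ↦ hw.mono_right h

lemma chainsOff_union (m : ℕ) (K L : Set (Fin n → ℝ)) :
    chainsOff m (K ∪ L) = chainsOff m K ⊓ chainsOff m L := by
  simp only [chainsOff, ← supported_inter, disjoint_union_right, ofPred_and]

lemma chainsOff_empty (m : ℕ) : chainsOff m (∅ : Set (Fin n → ℝ)) = ⊤ := by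
  simp [Submodule.eq_top_iff', mem_chainsOff]

lemma boundary_mem_chainsOff {m : ℕ} {K : Set (Fin n → ℝ)} {c : CubicalChain n}
    (hc : c ∈ chainsOff m K) : boundary c ∈ chainsOff m K :=
  boundary_mem_supported (fun _ _ hw hK ↦ hK.mono_left (hw.cell_subset m)) hc

lemma subdivide_pow_mem_chainsOff {m : ℕ} {K : Set (Fin n → ℝ)} {c : CubicalChain n}
    (hc : c ∈ chainsOff m K) (k : ℕ) : (subdivide ^ k) c ∈ chainsOff (m + k) K := by
  induction k with
  | zero => exact hc
  | succ k ih =>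
    rw [subdivide_pow_add, pow_one]
    exact subdivide_mem_supported
      (fun w _ hw ↦ hw.mono_left (cell_subset_cell_parent (m + k) w)) ih

lemma exists_isOpen_mem_chainsOff {m : ℕ} {K : Set (Fin n → ℝ)} {c : CubicalChain n}
    (hc : c ∈ chainsOff m K) : ∃ O, IsOpen O ∧ K ⊆ O ∧ c ∈ chainsOff m O := by
  have hclosed : IsClosed (⋃ w : support c, cell m w.1) :=
    ((locallyFinite_cell m).comp_injective Subtype.val_injective).isClosed_iUnion
      fun w ↦ isClosed_cell m w.1
  refine ⟨(⋃ w : support c, cell m w.1)ᶜ, hclosed.isOpen_compl, ?_,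
    mem_chainsOff.2 fun w hw ↦ ?_⟩
  · rw [subset_compl_comm, iUnion_subset_iff]
    exact fun w ↦ (mem_chainsOff.1 hc w.1 w.2).subset_compl_right
  · exact disjoint_compl_right.mono_left (subset_iUnion_of_subset ⟨w, hw⟩ subset_rfl)

/-- The chains on the grid of mesh `2 ^ (-m)` whose `k`-th subdivision bounds off `K`. -/
noncomputable def boundariesAfter (m : ℕ) (K : Set (Fin n → ℝ)) (k : ℕ) :
    Submodule (ZMod 2) (CubicalChain n) :=
  ((chainsOff (m + k) K).map boundary).comap (subdivide ^ k)

lemma mem_boundariesAfter {m : ℕ} {K : Set (Fin n → ℝ)} {k : ℕ} {z : CubicalChain n} :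
    z ∈ boundariesAfter m K k ↔ ∃ b ∈ chainsOff (m + k) K, boundary b = (subdivide ^ k) z :=
  Iff.rfl

lemma subdivide_pow_mem_boundariesAfter_iff {m : ℕ} {K : Set (Fin n → ℝ)} {k l : ℕ}
    {z : CubicalChain n} :
    (subdivide ^ k) z ∈ boundariesAfter (m + k) K l ↔ z ∈ boundariesAfter m K (k + l) := by
  simp only [mem_boundariesAfter, subdivide_pow_add, add_assoc]

lemma boundariesAfter_mono (m : ℕ) (K : Set (Fin n → ℝ)) : Monotone (boundariesAfter m K) := by
  intro k l hkl z hz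
  obtain ⟨j, rfl⟩ := Nat.exists_eq_add_of_le hkl
  obtain ⟨b, hb, hbz⟩ := mem_boundariesAfter.1 hz
  refine mem_boundariesAfter.2 ⟨(subdivide ^ j) b, ?_, ?_⟩
  · exact add_assoc m k j ▸ subdivide_pow_mem_chainsOff hb j
  · rw [boundary_subdivide_pow, hbz, subdivide_pow_add]

/-- The chains on the grid of mesh `2 ^ (-m)` that bound off `K`, after subdivision. -/
noncomputable def boundaries (m : ℕ) (K : Set (Fin n → ℝ)) : Submodule (ZMod 2) (CubicalChain n) :=
  ⨆ k, boundariesAfter m K k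

lemma mem_boundaries {m : ℕ} {K : Set (Fin n → ℝ)} {z : CubicalChain n} :
    z ∈ boundaries m K ↔ ∃ k, z ∈ boundariesAfter m K k :=
  Submodule.mem_iSup_of_chain ⟨boundariesAfter m K, boundariesAfter_mono m K⟩ z

lemma boundaries_anti (m : ℕ) {K L : Set (Fin n → ℝ)} (h : K ⊆ L) :
    boundaries m L ≤ boundaries m K :=
  iSup_mono fun k ↦ Submodule.comap_mono (Submodule.map_mono (chainsOff_anti (m + k) h))

lemma boundary_mem_boundaries {m : ℕ} {K : Set (Fin n → ℝ)} {b : CubicalChain n}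
    (hb : b ∈ chainsOff m K) : boundary b ∈ boundaries m K :=
  mem_boundaries.2 ⟨0, b, hb, rfl⟩

lemma subdivide_pow_mem_boundaries_iff {m : ℕ} {K : Set (Fin n → ℝ)} {k : ℕ}
    {z : CubicalChain n} : (subdivide ^ k) z ∈ boundaries (m + k) K ↔ z ∈ boundaries m K := by
  simp only [mem_boundaries, subdivide_pow_mem_boundariesAfter_iff]
  exact ⟨fun ⟨l, hl⟩ ↦ ⟨k + l, hl⟩,
    fun ⟨l, hl⟩ ↦ ⟨l, boundariesAfter_mono m K (Nat.le_add_left l k) hl⟩⟩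

lemma exists_isOpen_mem_boundaries {m : ℕ} {K : Set (Fin n → ℝ)} {z : CubicalChain n}
    (hz : z ∈ boundaries m K) : ∃ O, IsOpen O ∧ K ⊆ O ∧ z ∈ boundaries m O := by
  obtain ⟨k, b, hb, hbz⟩ := mem_boundaries.1 hz
  obtain ⟨O, hO, hKO, hbO⟩ := exists_isOpen_mem_chainsOff hb
  exact ⟨O, hO, hKO, mem_boundaries.2 ⟨k, b, hbO, hbz⟩⟩

/-- The cycles off `K` on the grid of mesh `2 ^ (-m)`. -/
noncomputable def cycles (m : ℕ) (K : Set (Fin n → ℝ)) : Submodule (ZMod 2) (CubicalChain n) :=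
  LinearMap.ker boundary ⊓ chainsOff m K

lemma mem_cycles {m : ℕ} {K : Set (Fin n → ℝ)} {z : CubicalChain n} :
    z ∈ cycles m K ↔ boundary z = 0 ∧ z ∈ chainsOff m K :=
  Iff.rfl

lemma cycles_anti (m : ℕ) {K L : Set (Fin n → ℝ)} (h : K ⊆ L) : cycles m L ≤ cycles m K :=
  inf_le_inf_left _ (chainsOff_anti m h)

lemma subdivide_pow_mem_cycles {m : ℕ} {K : Set (Fin n → ℝ)} {z : CubicalChain n}
    (hz : z ∈ cycles m K) (k : ℕ) : (subdivide ^ k) z ∈ cycles (m + k) K := by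
  obtain ⟨hz, hzK⟩ := mem_cycles.1 hz
  refine mem_cycles.2 ⟨?_, subdivide_pow_mem_chainsOff hzK k⟩
  rw [boundary_subdivide_pow, hz, map_zero]

lemma add_mem_cycles_inter {m : ℕ} {A B : Set (Fin n → ℝ)} {a b : CubicalChain n}
    (ha : a ∈ chainsOff m A) (hb : b ∈ chainsOff m B) (hab : boundary a = boundary b) :
    a + b ∈ cycles m (A ∩ B) := by
  refine mem_cycles.2 ⟨?_, add_mem (chainsOff_anti m inter_subset_left ha)
    (chainsOff_anti m inter_subset_right hb)⟩
  rw [map_add, hab, ZModModule.add_self]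

/-- Sufficiently fine cells of a chain off `A ∩ B` miss `A` or `B`. -/
lemma exists_subdivide_pow_eq_add {m : ℕ} {c : CubicalChain n} {A B : Set (Fin n → ℝ)}
    (hA : IsCompact A) (hB : IsCompact B) (hc : c ∈ chainsOff m (A ∩ B)) :
    ∃ k, ∃ T : Set (Fin n → ℤ), indicator T ((subdivide ^ k) c) ∈ chainsOff (m + k) A ∧
      indicator Tᶜ ((subdivide ^ k) c) ∈ chainsOff (m + k) B := by
  obtain ⟨O, hO, hABO, hcO⟩ := exists_isOpen_mem_chainsOff hc
  have hdisj : Disjoint (A \ O) (B \ O) :=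
    disjoint_left.2 fun x hxA hxB ↦ hxA.2 (hABO ⟨hxA.1, hxB.1⟩)
  obtain ⟨r, hr, hdist⟩ :=
    Metric.exists_pos_forall_lt_edist (hA.diff hO) (hB.diff hO).isClosed hdisj
  obtain ⟨k, hk⟩ := exists_pow_lt_of_lt_one (NNReal.coe_pos.2 hr) one_half_lt_one
  refine ⟨k, {w | Disjoint (cell (m + k) w) A}, ?_, ?_⟩
  · exact mem_chainsOff.2 fun w hw ↦ (mem_of_indicator_ne_zero hw)
  refine mem_chainsOff.2 fun w hw ↦ disjoint_left.2 fun y hy hyB ↦ ?_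
  obtain ⟨hwA, hcw⟩ := indicator_apply_ne_zero.1 hw
  obtain ⟨x, hx, hxA⟩ := not_disjoint_iff.1 hwA
  have hwO := disjoint_left.1 (mem_chainsOff.1 (subdivide_pow_mem_chainsOff hcO k) w hcw)
  have hfar := hdist x ⟨hxA, hwO hx⟩ y ⟨hyB, hwO hy⟩
  have hnear : dist x y ≤ (1 / 2) ^ k := (dist_le_of_mem_cell hx hy).trans
    (pow_le_pow_of_le_one (by norm_num) (by norm_num) (Nat.le_add_left k m))
  rw [edist_dist, ENNReal.lt_ofReal_iff_toReal_lt ENNReal.coe_ne_top] at hfar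
  exact absurd hfar (by simpa using (hnear.trans_lt hk).le)

lemma boundary_mem_boundaries_union {m : ℕ} {A B : Set (Fin n → ℝ)} (hA : IsCompact A)
    (hB : IsCompact B) {a b : CubicalChain n} (ha : a ∈ chainsOff m A) (hb : b ∈ chainsOff m B)
    (hab : a + b ∈ boundaries m (A ∩ B)) : boundary a ∈ boundaries m (A ∪ B) := by
  obtain ⟨k, e, he, hbe⟩ := mem_boundaries.1 hab
  obtain ⟨l, T, heA, heB⟩ := exists_subdivide_pow_eq_add hA hB he
  set eA := indicator T ((subdivide ^ l) e)
  set eB := indicator Tᶜ ((subdivide ^ l) e)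
  set a' := (subdivide ^ (k + l)) a
  set b' := (subdivide ^ (k + l)) b
  have hsum : boundary eA + boundary eB = a' + b' := by
    rw [← map_add, indicator_self_add_compl, boundary_subdivide_pow, hbe, ← subdivide_pow_add,
      map_add]
  have heq : a' + boundary eA = b' + boundary eB := by
    rw [← sub_eq_zero, ZModModule.sub_eq_add, add_add_add_comm, hsum, ZModModule.add_self]
  rw [add_assoc] at heA heB
  refine mem_boundaries.2 ⟨k + l, a' + boundary eA, ?_, ?_⟩
  · rw [chainsOff_union]
    exact ⟨add_mem (subdivide_pow_mem_chainsOff ha _) (boundary_mem_chainsOff heA),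
      heq ▸ add_mem (subdivide_pow_mem_chainsOff hb _) (boundary_mem_chainsOff heB)⟩
  · rw [map_add, boundary_boundary, add_zero, boundary_subdivide_pow]

lemma exists_common_primitives {m : ℕ} {A B : Set (Fin n → ℝ)} {z : CubicalChain n}
    (hA : z ∈ boundaries m A) (hB : z ∈ boundaries m B) :
    ∃ k, ∃ a ∈ chainsOff (m + k) A, ∃ b ∈ chainsOff (m + k) B,
      boundary a = (subdivide ^ k) z ∧ boundary b = (subdivide ^ k) z := by
  obtain ⟨k, hk⟩ := mem_boundaries.1 hA
  obtain ⟨l, hl⟩ := mem_boundaries.1 hB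
  obtain ⟨a, ha, haz⟩ := boundariesAfter_mono m A (Nat.le_add_right k l) hk
  obtain ⟨b, hb, hbz⟩ := boundariesAfter_mono m B (Nat.le_add_left l k) hl
  exact ⟨k + l, a, ha, b, hb, haz, hbz⟩

/-! ### Acyclic complements -/

/-- The complement of `K` is acyclic for mod 2 homology with infinite cubical chains, in all
degrees. -/
def AcyclicCompl (K : Set (Fin n → ℝ)) : Prop := ∀ m, cycles m K ≤ boundaries m K

/-- Mayer–Vietoris for a class that dies off `A` and off `B`. -/
lemma AcyclicCompl.mem_boundaries_union {m : ℕ} {A B : Set (Fin n → ℝ)} {z : CubicalChain n}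
    (h : AcyclicCompl (A ∩ B)) (hA : IsCompact A) (hB : IsCompact B) (hzA : z ∈ boundaries m A)
    (hzB : z ∈ boundaries m B) : z ∈ boundaries m (A ∪ B) := by
  obtain ⟨k, a, ha, b, hb, haz, hbz⟩ := exists_common_primitives hzA hzB
  rw [← subdivide_pow_mem_boundaries_iff (k := k), ← haz]
  exact boundary_mem_boundaries_union hA hB ha hb
    (h _ (add_mem_cycles_inter ha hb (haz.trans hbz.symm)))

private lemma sum_Ioc_inf_sup (f : ℤ → ZMod 2) (q a : ℤ) :
    ∑ b ∈ Finset.Ioc (q ⊓ a) (q ⊔ a), f b + ∑ b ∈ Finset.Ioc (q ⊓ (a - 1)) (q ⊔ (a - 1)), f b =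
      f a := by
  rcases lt_or_ge q a with h | h
  · have : Finset.Ioc q a = insert a (Finset.Ioc q (a - 1)) := by grind
    rw [inf_of_le_left h.le, sup_of_le_right h.le, inf_of_le_left (by omega),
      sup_of_le_right (by omega), this, Finset.sum_insert (by simp), add_assoc,
      ZModModule.add_self, add_zero]
  · have : Finset.Ioc (a - 1) q = insert a (Finset.Ioc a q) := by grind
    rw [inf_of_le_right h, sup_of_le_left h, inf_of_le_right (by omega),
      sup_of_le_left (by omega), this, Finset.sum_insert (by simp), add_left_comm,
      ZModModule.add_self, add_zero]

private lemma sum_Ioc_inf_sup_telescope (h : ℤ → ZMod 2) (q a : ℤ) :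
    ∑ b ∈ Finset.Ioc (q ⊓ a) (q ⊔ a), (h b + h (b - 1)) = h a + h q := by
  have hstep (a : ℤ) := sum_Ioc_inf_sup (fun b ↦ h b + h (b - 1)) q a
  induction a using Int.inductionOn' (b := q) with
  | zero => simp [ZModModule.add_self]
  | succ k _ ih =>
    have := hstep (k + 1)
    rw [add_sub_cancel_right, ih] at this
    linear_combination this - CharTwo.add_self_eq_zero (h q)
  | pred k _ ih =>
    have := hstep k
    rw [ih] at this
    linear_combination this - CharTwo.add_self_eq_zero (h q)

/-- Pushing every cell to infinity in direction `i`, away from the hyperplane that bisects the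
cells with `i`-th index `2 * q i + 1`. -/
noncomputable def push (i : Fin n) (q : Fin n → ℤ) : Module.End (ZMod 2) (CubicalChain n) where
  toFun c w := if Even (w i) then 0 else
    ∑ b ∈ Finset.Ioc (q i ⊓ (w i / 2)) (q i ⊔ (w i / 2)), c (update w i (2 * b))
  map_add' a b := by
    ext w
    simp only [Pi.add_apply]
    split_ifs
    · simp
    · rw [Finset.sum_add_distrib]
  map_smul' r c := by
    ext w
    simp [Finset.mul_sum]

lemma push_apply (i : Fin n) (q : Fin n → ℤ) (c : CubicalChain n) (w : Fin n → ℤ) :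
    push i q c w = if Even (w i) then 0 else
      ∑ b ∈ Finset.Ioc (q i ⊓ (w i / 2)) (q i ⊔ (w i / 2)), c (update w i (2 * b)) :=
  rfl

/-- The slice of a chain along the central subspace of the cell `2 * q + 1` orthogonal to the
directions in `s`, extended constantly in those directions. -/
def project (s : Finset (Fin n)) (q : Fin n → ℤ) (c : CubicalChain n) : CubicalChain n := fun w ↦
  if ∀ i ∈ s, ¬ Even (w i) then c (s.piecewise (2 * q + 1) w) else 0

lemma project_empty (q : Fin n → ℤ) (c : CubicalChain n) : project ∅ q c = c := by
  ext w
  simp [project]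

lemma project_insert {s : Finset (Fin n)} {i : Fin n} (hi : i ∉ s) (q : Fin n → ℤ)
    (c : CubicalChain n) : project (insert i s) q c = project s q (project {i} q c) := by
  ext w
  simp only [project, Finset.mem_singleton, forall_eq, Finset.piecewise_insert,
    Finset.piecewise_singleton, Finset.piecewise_eq_of_notMem s _ _ hi, Finset.forall_mem_insert]
  split_ifs <;> tauto

lemma commute_partialBoundary_push {i k : Fin n} (hk : k ≠ i) (q : Fin n → ℤ) :
    Commute (partialBoundary k) (push i q) := by
  ext c w
  simp only [Module.End.mul_apply, partialBoundary_apply, push_apply, update_of_ne hk,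
    update_of_ne hk.symm, update_comm hk]
  split_ifs <;> simp [Finset.sum_add_distrib]

lemma partialBoundary_push_add_push_partialBoundary (i : Fin n) (q : Fin n → ℤ)
    (c : CubicalChain n) :
    partialBoundary i (push i q c) + push i q (partialBoundary i c) = c + project {i} q c := by
  ext w
  simp only [Pi.add_apply, partialBoundary_apply, push_apply, project, update_self, update_idem,
    Finset.mem_singleton, forall_eq, Finset.piecewise_singleton, even_two_mul, if_true]
  rcases Int.even_or_odd' (w i) with ⟨a, ha | ha⟩
  · have hup : (w i + 1) / 2 = a := by omega
    have hdown : (w i - 1) / 2 = a - 1 := by omega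
    have heven : Even (w i) ∧ ¬ Even (w i + 1) ∧ ¬ Even (w i - 1) := by grind
    simp only [heven, hup, hdown, if_true, if_false, not_true_eq_false, add_zero]
    rw [sum_Ioc_inf_sup fun b ↦ c (update w i (2 * b)), ← ha, update_eq_self]
  · have hodd : ¬ Even (w i) := by grind
    have hhalf : w i / 2 = a := by omega
    have hsub (b : ℤ) : 2 * (b - 1) + 1 = 2 * b - 1 := by ring
    have htel := sum_Ioc_inf_sup_telescope (fun b ↦ c (update w i (2 * b + 1))) (q i) a
    simp only [hodd, hhalf, if_false, not_false_eq_true, if_true, zero_add]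
    simp only [hsub] at htel
    rw [htel, ← ha, update_eq_self]
    rfl

lemma boundary_push_add_push_boundary (i : Fin n) (q : Fin n → ℤ) (c : CubicalChain n) :
    boundary (push i q c) + push i q (boundary c) = c + project {i} q c := by
  rw [boundary, LinearMap.sum_apply, LinearMap.sum_apply, map_sum, ← Finset.sum_add_distrib,
    ← partialBoundary_push_add_push_partialBoundary]
  refine Finset.sum_eq_single i (fun k _ hk ↦ ?_) (by simp)
  rw [show partialBoundary k (push i q c) = push i q (partialBoundary k c) from
    LinearMap.congr_fun (commute_partialBoundary_push hk q) c, ZModModule.add_self]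

lemma boundary_project_singleton {z : CubicalChain n} (hz : boundary z = 0) (i : Fin n)
    (q : Fin n → ℤ) : boundary (project {i} q z) = 0 := by
  simpa [hz] using (congrArg boundary (boundary_push_add_push_boundary i q z)).symm

lemma mem_cell_update {m : ℕ} {w : Fin n → ℤ} {i : Fin n} {z : ℤ} {x : Fin n → ℝ}
    (hx : x ∈ cell m w) (hz : ((z / 2 : ℤ) : ℝ) ≤ 2 ^ m * x i)
    (hz' : 2 ^ m * x i ≤ ((z + 1) / 2 : ℤ)) : x ∈ cell m (update w i z) := by
  rw [mem_cell, forall_update_iff w fun j (z : ℤ) ↦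
    ((z / 2 : ℤ) : ℝ) ≤ 2 ^ m * x j ∧ 2 ^ m * x j ≤ ((z + 1) / 2 : ℤ)]
  exact ⟨⟨hz, hz'⟩, fun j _ ↦ mem_cell.1 hx j⟩

/-- The index `q` of the grid cube `2 * q + 1` that contains `p`, rounding down. -/
noncomputable def cubeIndex (m : ℕ) (p : Fin n → ℝ) : Fin n → ℤ := fun i ↦ ⌊2 ^ m * p i⌋

lemma mem_cell_cubeIndex (m : ℕ) (p : Fin n → ℝ) : p ∈ cell m (2 * cubeIndex m p + 1) := by
  refine mem_cell.2 fun i ↦ ?_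
  have hlow : (2 * cubeIndex m p + 1) i / 2 = ⌊2 ^ m * p i⌋ := by
    simp [cubeIndex]; omega
  have hhigh : ((2 * cubeIndex m p + 1) i + 1) / 2 = ⌊2 ^ m * p i⌋ + 1 := by
    simp [cubeIndex]; omega
  rw [hlow, hhigh, Int.cast_add, Int.cast_one]
  exact ⟨Int.floor_le _, (Int.lt_floor_add_one _).le⟩

section Subsingleton

variable {m : ℕ} {K : Set (Fin n → ℝ)} {p : Fin n → ℝ}

lemma push_mem_chainsOff (hK : K ⊆ {p}) {c : CubicalChain n} (hc : c ∈ chainsOff m K)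
    (i : Fin n) : push i (cubeIndex m p) c ∈ chainsOff m K := by
  refine mem_chainsOff.2 fun w hw ↦ disjoint_left.2 fun x hx hxK ↦ ?_
  obtain rfl : x = p := hK hxK
  rw [push_apply] at hw
  split_ifs at hw with hodd
  · exact hw rfl
  obtain ⟨b, hb, hcb⟩ := Finset.exists_ne_zero_of_sum_ne_zero hw
  refine disjoint_left.1 (mem_chainsOff.1 hc _ hcb) (mem_cell_update hx ?_ ?_) hxK
  all_goals
    obtain ⟨hx₁, hx₂⟩ := mem_cell.1 hx i
    have hq := Int.floor_le (2 ^ m * x i)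
    have hq' := (Int.lt_floor_add_one (2 ^ m * x i)).le
    rw [Finset.mem_Ioc, inf_lt_iff, le_sup_iff, cubeIndex] at hb
  · have hb : (2 * b / 2 : ℤ) ≤ (⌊2 ^ m * x i⌋ : ℝ) ∨ (2 * b / 2 : ℤ) ≤ ((w i / 2 : ℤ) : ℝ) := by
      simp only [Int.cast_le]
      omega
    exact hb.elim hq.trans' hx₁.trans'
  · have hb : (⌊2 ^ m * x i⌋ + 1 : ℝ) ≤ ((2 * b + 1) / 2 : ℤ) ∨
        (((w i + 1) / 2 : ℤ) : ℝ) ≤ ((2 * b + 1) / 2 : ℤ) := by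
      simp only [← Int.cast_one (R := ℝ), ← Int.cast_add, Int.cast_le]
      grind
    exact hb.elim hq'.trans hx₂.trans

lemma project_singleton_mem_chainsOff (hK : K ⊆ {p}) {c : CubicalChain n}
    (hc : c ∈ chainsOff m K) (i : Fin n) : project {i} (cubeIndex m p) c ∈ chainsOff m K := by
  refine mem_chainsOff.2 fun w hw ↦ disjoint_left.2 fun x hx hxK ↦ ?_
  obtain rfl : x = p := hK hxK
  simp only [project, Finset.piecewise_singleton] at hw
  obtain ⟨hlow, hhigh⟩ := mem_cell.1 (mem_cell_cubeIndex m x) i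
  exact disjoint_left.1 (mem_chainsOff.1 hc _ fun h ↦ hw (by rw [h, ite_self]))
    (mem_cell_update hx hlow hhigh) hxK

lemma add_project_mem_boundaries (hK : K ⊆ {p}) (s : Finset (Fin n)) {z : CubicalChain n}
    (hz : z ∈ cycles m K) : z + project s (cubeIndex m p) z ∈ boundaries m K := by
  induction s using Finset.induction_on generalizing z with
  | empty => rw [project_empty, ZModModule.add_self]; exact zero_mem _
  | insert i s hi ih =>
    obtain ⟨hz, hzK⟩ := mem_cycles.1 hz
    have hpush := boundary_mem_boundaries (push_mem_chainsOff hK hzK i)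
    have hhom := boundary_push_add_push_boundary i (cubeIndex m p) z
    rw [hz, map_zero, add_zero] at hhom
    have hproj := ih (mem_cycles.2
      ⟨boundary_project_singleton hz i _, project_singleton_mem_chainsOff hK hzK i⟩)
    simpa only [hhom, project_insert hi, ZModModule.add_add_add_cancel] using add_mem hpush hproj

/-- The sum of all top-dimensional cells. -/
def fundamental (n : ℕ) : CubicalChain n := fun w ↦ if ∀ i, ¬ Even (w i) then 1 else 0

lemma add_smul_fundamental_mem_boundaries (hK : K ⊆ {p}) {z : CubicalChain n}
    (hz : z ∈ cycles m K) : z + z (2 * cubeIndex m p + 1) • fundamental n ∈ boundaries m K := by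
  convert add_project_mem_boundaries hK Finset.univ hz using 2
  ext w
  simp [fundamental, project]

end Subsingleton

lemma acyclicCompl_singleton (p : Fin n → ℝ) : AcyclicCompl {p} := by
  intro m z hz
  have hp : z (2 * cubeIndex m p + 1) = 0 := by
    by_contra h
    exact disjoint_singleton_right.1 (mem_chainsOff.1 (mem_cycles.1 hz).2 _ h)
      (mem_cell_cubeIndex m p)
  simpa [hp] using add_smul_fundamental_mem_boundaries subset_rfl hz

lemma boundary_fundamental : boundary (fundamental n) = 0 := by
  ext w
  refine (boundary_apply _ _).trans (Finset.sum_eq_zero fun i _ ↦ ?_)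
  rw [partialBoundary_apply]
  split_ifs with hi
  · have hodd : ¬ Even (w i + 1) ∧ ¬ Even (w i - 1) := by grind
    simp only [fundamental, forall_update_iff w fun _ (z : ℤ) ↦ ¬ Even z, hodd]
    exact ZModModule.add_self _
  · rfl

lemma fundamental_mem_homogeneous : fundamental n ∈ homogeneous n n := by
  refine mem_supported.2 fun w hw ↦ if_neg fun hodd ↦ hw ?_
  rw [mem_ofPred_eq, dim, Finset.filter_true_of_mem fun i _ ↦ hodd i, Finset.card_univ,
    Fintype.card_fin]

lemma subdivide_pow_fundamental (k : ℕ) : (subdivide ^ k) (fundamental n) = fundamental n := by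
  rw [Module.End.pow_apply]
  refine iterate_fixed (funext fun w ↦ ?_) k
  have hfull : (∀ i, ¬ Even (w i)) → IsFullInParent w := fun h i ↦ by have := h i; grind
  rw [subdivide_apply]
  split_ifs with h
  · simp only [fundamental, comp_apply, even_parent (h _)]
  · exact (if_neg fun hodd ↦ h (hfull hodd)).symm

lemma fundamental_notMem_boundaries (m : ℕ) (K : Set (Fin n → ℝ)) :
    fundamental n ∉ boundaries m K := by
  intro h
  obtain ⟨k, b, -, hb⟩ := mem_boundaries.1 h
  have := congrFun (hb.trans (subdivide_pow_fundamental k)) 1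
  simp [boundary_apply, partialBoundary_apply, fundamental] at this

/-! ### Complements of embedded spheres -/

/-- The class of `g` generates the mod 2 homology of the complement of `K`, which is
one-dimensional and concentrated in degree `d`. -/
structure IsGenerator (m : ℕ) (g : CubicalChain n) (K : Set (Fin n → ℝ)) (d : ℕ) : Prop where
  mem_cycles : g ∈ cycles m K
  mem_homogeneous : g ∈ homogeneous n d
  notMem_boundaries : g ∉ boundaries m K
  mem_boundaries_or : ∀ k, ∀ z ∈ cycles (m + k) K,
    z ∈ boundaries (m + k) K ∨ z + (subdivide ^ k) g ∈ boundaries (m + k) K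

/-- The complement of `K` has the mod 2 homology, with infinite chains, of a single generator in
degree `d`, like the complement of an `(n - d - 1)`-sphere in `ℝⁿ`. -/
def SphericalCompl (K : Set (Fin n → ℝ)) (d : ℕ) : Prop := ∃ m g, IsGenerator m g K d

lemma sphericalCompl_empty : SphericalCompl (∅ : Set (Fin n → ℝ)) n := by
  refine ⟨0, fundamental n, ⟨mem_cycles.2 ⟨boundary_fundamental, by simp [chainsOff_empty]⟩,
    fundamental_mem_homogeneous, fundamental_notMem_boundaries 0 ∅, fun k z hz ↦ ?_⟩⟩
  have hmem := add_smul_fundamental_mem_boundaries (empty_subset {0}) hz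
  rw [subdivide_pow_fundamental]
  rcases (by decide : ∀ t : ZMod 2, t = 0 ∨ t = 1) (z (2 * cubeIndex (0 + k) 0 + 1)) with h | h
  · exact .inl (by rwa [h, zero_smul, add_zero] at hmem)
  · exact .inr (by rwa [h, one_smul] at hmem)

lemma IsGenerator.subdivide_pow {m d : ℕ} {g : CubicalChain n} {K : Set (Fin n → ℝ)}
    (h : IsGenerator m g K d) (l : ℕ) : IsGenerator (m + l) ((subdivide ^ l) g) K d where
  mem_cycles := subdivide_pow_mem_cycles h.mem_cycles l
  mem_homogeneous := subdivide_pow_mem_homogeneous h.mem_homogeneous l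
  notMem_boundaries := subdivide_pow_mem_boundaries_iff.not.2 h.notMem_boundaries
  mem_boundaries_or k z hz := by
    rw [← subdivide_pow_add]
    rw [add_assoc] at hz ⊢
    exact h.mem_boundaries_or (l + k) z hz

section Union

variable {m d : ℕ} {A B : Set (Fin n → ℝ)} {a b : CubicalChain n}

lemma add_mem_boundaries_inter (hA : AcyclicCompl A) (hB : AcyclicCompl B)
    (ha : a ∈ chainsOff m A) (hb : b ∈ chainsOff m B) (hab : boundary a = boundary b)
    (h : boundary a ∈ boundaries m (A ∪ B)) : a + b ∈ boundaries m (A ∩ B) := by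
  obtain ⟨k, e, he, hbe⟩ := mem_boundaries.1 h
  rw [chainsOff_union] at he
  have hcycle {K : Set (Fin n → ℝ)} {c : CubicalChain n} (hc : c ∈ chainsOff m K)
      (heK : e ∈ chainsOff (m + k) K) (hac : boundary a = boundary c) :
      (subdivide ^ k) c + e ∈ cycles (m + k) K := by
    refine mem_cycles.2 ⟨?_, add_mem (subdivide_pow_mem_chainsOff hc k) heK⟩
    rw [map_add, boundary_subdivide_pow, hbe, hac, ZModModule.add_self]
  have hae := boundaries_anti _ (inter_subset_left (t := B)) (hA _ (hcycle ha he.1 rfl))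
  have hbe := boundaries_anti _ (inter_subset_right (s := A)) (hB _ (hcycle hb he.2 hab))
  rw [← subdivide_pow_mem_boundaries_iff (k := k), map_add]
  have hsum := add_mem hae hbe
  rwa [add_add_add_comm, ZModModule.add_self, add_zero] at hsum

lemma IsGenerator.boundary_union (hcA : IsCompact A) (hcB : IsCompact B) (hA : AcyclicCompl A)
    (hB : AcyclicCompl B) (ha : a ∈ chainsOff m A) (hb : b ∈ chainsOff m B)
    (hda : a ∈ homogeneous n (d + 1)) (h : IsGenerator m (a + b) (A ∩ B) (d + 1)) :
    IsGenerator m (boundary a) (A ∪ B) d := by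
  have hab : boundary a = boundary b := by
    rw [← sub_eq_zero, ZModModule.sub_eq_add, ← map_add, (CubicalChain.mem_cycles.1 h.mem_cycles).1]
  refine ⟨CubicalChain.mem_cycles.2 ⟨boundary_boundary a, ?_⟩, boundary_mem_homogeneous hda,
    fun hmem ↦ h.notMem_boundaries (add_mem_boundaries_inter hA hB ha hb hab hmem),
    fun k z hz ↦ ?_⟩
  · rw [chainsOff_union]
    exact ⟨boundary_mem_chainsOff ha, hab ▸ boundary_mem_chainsOff hb⟩
  obtain ⟨l, a', ha', b', hb', haz, hbz⟩ := exists_common_primitives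
    (hA _ (cycles_anti _ subset_union_left hz)) (hB _ (cycles_anti _ subset_union_right hz))
  have hcycle := add_mem_cycles_inter ha' hb' (haz.trans hbz.symm)
  simp only [← subdivide_pow_mem_boundaries_iff (m := m + k) (k := l)]
  rw [map_add, ← subdivide_pow_add, ← boundary_subdivide_pow, ← haz, ← map_add]
  rw [add_assoc] at ha' hb' hcycle ⊢
  refine (h.mem_boundaries_or (k + l) _ hcycle).imp
    (boundary_mem_boundaries_union hcA hcB ha' hb') fun hmem ↦ ?_
  rw [map_add, add_add_add_comm] at hmem
  exact boundary_mem_boundaries_union hcA hcB (add_mem ha' (subdivide_pow_mem_chainsOff ha _))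
    (add_mem hb' (subdivide_pow_mem_chainsOff hb _)) hmem

lemma SphericalCompl.union (h : SphericalCompl (A ∩ B) (d + 1)) (hcA : IsCompact A)
    (hcB : IsCompact B) (hA : AcyclicCompl A) (hB : AcyclicCompl B) :
    SphericalCompl (A ∪ B) d := by
  obtain ⟨m, g, hg⟩ := h
  obtain ⟨l, T, ha, hb⟩ := exists_subdivide_pow_eq_add hcA hcB (mem_cycles.1 hg.mem_cycles).2
  have hg' := hg.subdivide_pow l
  rw [← indicator_self_add_compl T ((subdivide ^ l) g)] at hg'
  have hda := supported_mono inter_subset_right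
    (indicator_mem_supported_inter (T := T) (hg.subdivide_pow l).mem_homogeneous)
  exact ⟨m + l, _, hg'.boundary_union hcA hcB hA hB ha hb hda⟩

end Union

section Slices

variable {X : Type*} [TopologicalSpace X] {K : Set X} {φ : X → Fin n → ℝ} {h : X → ℝ}
  {m : ℕ} {z : CubicalChain n}

lemma exists_isOpen_mem_boundaries_image_slab [T2Space X] (hK : IsCompact K) (hφ : ContinuousOn φ K)
    (hh : Continuous h) {t : ℝ} (hz : z ∈ boundaries m (φ '' (K ∩ h ⁻¹' {t}))) :
    ∃ N, IsOpen N ∧ t ∈ N ∧ z ∈ boundaries m (φ '' (K ∩ h ⁻¹' N)) := by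
  obtain ⟨O, hO, hsub, hzO⟩ := exists_isOpen_mem_boundaries hz
  have hcpt : IsCompact (K ∩ φ ⁻¹' Oᶜ) :=
    hK.of_isClosed_subset (hφ.preimage_isClosed_of_isClosed hK.isClosed hO.isClosed_compl)
      inter_subset_left
  refine ⟨(h '' (K ∩ φ ⁻¹' Oᶜ))ᶜ, (hcpt.image hh).isClosed.isOpen_compl, ?_,
    boundaries_anti m ?_ hzO⟩
  · rintro ⟨x, ⟨hxK, hxO⟩, hxt⟩
    exact hxO (hsub ⟨x, ⟨hxK, hxt⟩, rfl⟩)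
  · rintro _ ⟨x, ⟨hxK, hx⟩, rfl⟩
    by_contra hxO
    exact hx ⟨x, ⟨hxK, hxO⟩, rfl⟩

lemma mem_boundaries_image_slab_Icc_union (hK : IsCompact K) (hφ : ContinuousOn φ K)
    (hinj : InjOn φ K) (hh : Continuous h) {a s t : ℝ} (has : a ≤ s) (hst : s ≤ t)
    (hs : AcyclicCompl (φ '' (K ∩ h ⁻¹' {s})))
    (hz : z ∈ boundaries m (φ '' (K ∩ h ⁻¹' Icc a s)))
    (hz' : z ∈ boundaries m (φ '' (K ∩ h ⁻¹' Icc s t))) :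
    z ∈ boundaries m (φ '' (K ∩ h ⁻¹' Icc a t)) := by
  have hcpt (u v : ℝ) : IsCompact (φ '' (K ∩ h ⁻¹' Icc u v)) :=
    (hK.inter_right (isClosed_Icc.preimage hh)).image_of_continuousOn
      (hφ.mono inter_subset_left)
  have hinter : φ '' (K ∩ h ⁻¹' Icc a s) ∩ φ '' (K ∩ h ⁻¹' Icc s t) = φ '' (K ∩ h ⁻¹' {s}) := by
    rw [← hinj.image_inter inter_subset_left inter_subset_left, ← inter_inter_distrib_left,
      ← preimage_inter, Icc_inter_Icc_eq_singleton has hst]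
  rw [← Icc_union_Icc_eq_Icc has hst, preimage_union, inter_union_distrib_left, image_union]
  exact (hinter ▸ hs).mem_boundaries_union (hcpt _ _) (hcpt _ _) hz hz'

theorem acyclicCompl_image_of_slices [T2Space X] (hK : IsCompact K) (hφ : ContinuousOn φ K)
    (hinj : InjOn φ K) (hh : Continuous h) (hconn : IsConnected (h '' K))
    (hslice : ∀ t ∈ h '' K, AcyclicCompl (φ '' (K ∩ h ⁻¹' {t}))) : AcyclicCompl (φ '' K) := by
  intro m z hz
  obtain ⟨a, b, hI⟩ : ∃ a b, h '' K = Icc a b :=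
    ⟨_, _, eq_Icc_of_connected_compact hconn (hK.image hh)⟩
  have hab : a ≤ b := nonempty_Icc.1 (hI ▸ hconn.nonempty)
  have hfibre {t : ℝ} (ht : t ∈ Icc a b) : AcyclicCompl (φ '' (K ∩ h ⁻¹' {t})) :=
    hslice t (hI.ge ht)
  have hz' (J : Set ℝ) : z ∈ cycles m (φ '' (K ∩ h ⁻¹' J)) :=
    cycles_anti m (image_mono inter_subset_left) hz
  have hloc (t : Icc a b) : ∃ N, IsOpen N ∧ (t : ℝ) ∈ N ∧ z ∈ boundaries m (φ '' (K ∩ h ⁻¹' N)) :=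
    exists_isOpen_mem_boundaries_image_slab hK hφ hh <|
      hfibre t.2 m (hz' _)
  choose N hN htN hzN using hloc
  obtain ⟨t, ht0, hmono, ⟨M, hM⟩, hcover⟩ := exists_monotone_Icc_subset_open_cover_Icc hab
    (c := fun i ↦ Subtype.val ⁻¹' N i) (fun i ↦ (hN i).preimage continuous_subtype_val)
    fun i _ ↦ mem_iUnion.2 ⟨i, htN i⟩
  have hpiece (j : ℕ) : z ∈ boundaries m (φ '' (K ∩ h ⁻¹' Icc (t j) (t (j + 1)))) := by
    obtain ⟨i, hi⟩ := hcover j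
    refine boundaries_anti m (image_mono <| inter_subset_inter_right _ <| preimage_mono ?_) (hzN i)
    intro s hs
    exact @hi ⟨s, (t j).2.1.trans hs.1, hs.2.trans (t (j + 1)).2.2⟩ hs
  have hslab (j : ℕ) : z ∈ boundaries m (φ '' (K ∩ h ⁻¹' Icc a (t j))) := by
    induction j with
    | zero =>
      rw [ht0, Icc_self]
      exact hfibre (left_mem_Icc.2 hab) m (hz' _)
    | succ j ih =>
      exact mem_boundaries_image_slab_Icc_union hK hφ hinj hh (t j).2.1 (hmono j.le_succ)
        (hfibre (t j).2) ih (hpiece j)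
  refine boundaries_anti m (image_mono (subset_inter subset_rfl ?_)) (hslab M)
  rw [hM M le_rfl, ← hI]
  exact subset_preimage_image h K

end Slices

theorem acyclicCompl_image_convex {E : Type*} [NormedAddCommGroup E] [NormedSpace ℝ E]
    [FiniteDimensional ℝ E] {C : Set E} {φ : E → Fin n → ℝ} (hC : IsCompact C)
    (hconv : Convex ℝ C) (hne : C.Nonempty) (hφ : ContinuousOn φ C) (hinj : InjOn φ C) :
    AcyclicCompl (φ '' C) := by
  induction hk : Module.finrank ℝ E generalizing E with
  | zero =>
    have := Module.finrank_zero_iff.1 hk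
    obtain ⟨x, hx⟩ := hne
    rw [subsingleton_of_subsingleton.eq_singleton_of_mem hx, image_singleton]
    exact acyclicCompl_singleton _
  | succ k ih =>
    have : Nontrivial E := Module.nontrivial_of_finrank_pos (R := ℝ) (by omega)
    obtain ⟨ℓ, hℓ⟩ : ∃ ℓ : E →L[ℝ] ℝ, ℓ ≠ 0 := exists_ne 0
    have hker : Module.finrank ℝ ℓ.ker = k := by
      have := Module.Dual.finrank_ker_add_one_of_ne_zero (f := (ℓ : Module.Dual ℝ E))
        (fun h ↦ hℓ (ContinuousLinearMap.coe_injective h))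
      exact Nat.succ_injective (this.trans hk)
    refine acyclicCompl_image_of_slices hC hφ hinj ℓ.continuous
      ((hconv.isConnected hne).image _ ℓ.continuous.continuousOn) ?_
    rintro _ ⟨x, hx, rfl⟩
    have hemb : IsClosedEmbedding fun y : ℓ.ker ↦ x + y :=
      (Homeomorph.addLeft x).isClosedEmbedding.comp ℓ.isClosed_ker.isClosedEmbedding_subtypeVal
    have hslice : C ∩ ℓ ⁻¹' {ℓ x} = (fun y : ℓ.ker ↦ x + y) '' ((fun y : ℓ.ker ↦ x + y) ⁻¹' C) := by
      rw [image_preimage_eq_inter_range]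
      congr 1
      ext y
      exact ⟨fun hy ↦ ⟨⟨y - x, by simpa [sub_eq_zero] using hy⟩, by simp⟩,
        by rintro ⟨v, rfl⟩; simp⟩
    rw [hslice, ← image_comp]
    exact ih (hemb.isCompact_preimage hC)
      ((hconv.translate_preimage_right x).linear_preimage ℓ.ker.subtype) ⟨0, by simpa using hx⟩
      (hφ.comp hemb.continuous.continuousOn fun y hy ↦ hy)
      (hinj.comp hemb.injective.injOn fun y hy ↦ hy) hker

section Sphere

open Metric
open scoped RealInnerProductSpace

variable {E : Type*} [NormedAddCommGroup E] [InnerProductSpace ℝ E] {v : E}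

/-- The parametrization of the closed hemisphere centred at the unit vector `v` by the unit ball
of the hyperplane orthogonal to `v`. -/
noncomputable def hemisphereLift (v : E) (y : (ℝ ∙ v)ᗮ) : E := √(1 - ‖y‖ ^ 2) • v + y

lemma continuous_hemisphereLift : Continuous (hemisphereLift v) := by
  unfold hemisphereLift
  fun_prop

lemma inner_smul_self_add_orthogonal (hv : ‖v‖ = 1) (a : ℝ) (y : (ℝ ∙ v)ᗮ) :
    ⟪v, a • v + y⟫ = a := by
  simp [inner_add_right, inner_smul_right, hv,
    Submodule.mem_orthogonal_singleton_iff_inner_right.1 y.2]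

lemma norm_sq_smul_add_orthogonal (hv : ‖v‖ = 1) (a : ℝ) (y : (ℝ ∙ v)ᗮ) :
    ‖a • v + (y : E)‖ ^ 2 = a ^ 2 + ‖y‖ ^ 2 := by
  simp [norm_add_sq_real, inner_smul_left, norm_smul, hv,
    Submodule.mem_orthogonal_singleton_iff_inner_right.1 y.2]

lemma hemisphereLift_injective (hv : ‖v‖ = 1) : Injective (hemisphereLift v) := by
  intro y y' h
  have hsqrt := congr_arg (inner ℝ v) h
  simp only [hemisphereLift, inner_smul_self_add_orthogonal hv] at hsqrt
  rw [hemisphereLift, hemisphereLift, hsqrt] at h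
  exact Subtype.ext (add_left_cancel h)

lemma image_hemisphereLift_closedBall (hv : ‖v‖ = 1) :
    hemisphereLift v '' closedBall 0 1 = sphere 0 1 ∩ {x | 0 ≤ ⟪v, x⟫} := by
  ext x
  simp only [mem_image, mem_closedBall_zero_iff, mem_inter_iff, mem_sphere_zero_iff_norm,
    mem_ofPred_eq]
  constructor
  · rintro ⟨y, hy, rfl⟩
    have hy' : 0 ≤ 1 - ‖y‖ ^ 2 := by nlinarith [norm_nonneg y]
    refine ⟨?_, (inner_smul_self_add_orthogonal hv _ y).symm ▸ Real.sqrt_nonneg _⟩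
    rw [← sq_eq_sq₀ (norm_nonneg _) zero_le_one, hemisphereLift, norm_sq_smul_add_orthogonal hv,
      Real.sq_sqrt hy']
    ring
  · rintro ⟨hx, hvx⟩
    have horth : x - ⟪v, x⟫ • v ∈ (ℝ ∙ v)ᗮ := by
      simp [Submodule.mem_orthogonal_singleton_iff_inner_right, inner_sub_right, inner_smul_right,
        hv]
    let y : (ℝ ∙ v)ᗮ := ⟨_, horth⟩
    have hxy : ⟪v, x⟫ • v + y = x := add_sub_cancel _ _
    have hnorm := norm_sq_smul_add_orthogonal hv ⟪v, x⟫ y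
    rw [hxy, hx] at hnorm
    refine ⟨y, by nlinarith [norm_nonneg y], ?_⟩
    rw [hemisphereLift, show 1 - ‖y‖ ^ 2 = ⟪v, x⟫ ^ 2 by linarith, Real.sqrt_sq hvx, hxy]

lemma sphere_inter_hyperplane (v : E) :
    sphere 0 1 ∩ {x | ⟪v, x⟫ = 0} = ((↑) : (ℝ ∙ v)ᗮ → E) '' sphere 0 1 := by
  ext x
  constructor
  · rintro ⟨hx, hvx⟩
    exact ⟨⟨x, Submodule.mem_orthogonal_singleton_iff_inner_right.2 hvx⟩, by simpa using hx, rfl⟩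
  · rintro ⟨y, hy, rfl⟩
    exact ⟨by simpa using hy, Submodule.mem_orthogonal_singleton_iff_inner_right.1 y.2⟩

variable [FiniteDimensional ℝ E] {φ : E → Fin n → ℝ}

lemma acyclicCompl_image_hemisphere (hφ : ContinuousOn φ (sphere 0 1))
    (hinj : InjOn φ (sphere 0 1)) (hv : ‖v‖ = 1) :
    AcyclicCompl (φ '' (sphere 0 1 ∩ {x | 0 ≤ ⟪v, x⟫})) := by
  have hmaps : MapsTo (hemisphereLift v) (closedBall 0 1) (sphere 0 1) := by
    rw [mapsTo_iff_image_subset, image_hemisphereLift_closedBall hv]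
    exact inter_subset_left
  rw [← image_hemisphereLift_closedBall hv, ← image_comp]
  exact acyclicCompl_image_convex (isCompact_closedBall 0 1) (convex_closedBall 0 1)
    ⟨0, by simp⟩ (hφ.comp continuous_hemisphereLift.continuousOn hmaps)
    (hinj.comp (hemisphereLift_injective hv).injOn hmaps)

theorem sphericalCompl_image_sphere {d : ℕ} (hd : d + Module.finrank ℝ E = n)
    (hφ : ContinuousOn φ (sphere 0 1)) (hinj : InjOn φ (sphere 0 1)) :
    SphericalCompl (φ '' sphere 0 1) d := by
  induction hk : Module.finrank ℝ E generalizing E d with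
  | zero =>
    have := Module.finrank_zero_iff.1 hk
    rw [sphere_eq_empty_of_subsingleton one_ne_zero, image_empty, show d = n by omega]
    exact sphericalCompl_empty
  | succ k ih =>
    have : Nontrivial E := Module.nontrivial_of_finrank_pos (R := ℝ) (by omega)
    obtain ⟨v, hv⟩ := exists_norm_eq E zero_le_one
    let hemi (u : E) : Set E := sphere 0 1 ∩ {x | 0 ≤ ⟪u, x⟫}
    have hunion : sphere 0 1 = hemi v ∪ hemi (-v) := by
      ext x
      simp [hemi, inner_neg_left, ← and_or_left, le_total]
    have hinter : φ '' hemi v ∩ φ '' hemi (-v) = (φ ∘ (↑)) '' sphere (0 : (ℝ ∙ v)ᗮ) 1 := by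
      rw [← hinj.image_inter inter_subset_left inter_subset_left, image_comp,
        ← sphere_inter_hyperplane]
      congr 1
      ext x
      simp only [inner_neg_left, mem_inter_iff, mem_ofPred_eq]
      grind
    have hcpt (u : E) : IsCompact (φ '' hemi u) :=
      ((isCompact_sphere 0 1).inter_right (isClosed_le continuous_const
        (by fun_prop))).image_of_continuousOn (hφ.mono inter_subset_left)
    have hmaps : MapsTo ((↑) : (ℝ ∙ v)ᗮ → E) (sphere 0 1) (sphere 0 1) := fun y hy ↦ by
      simpa using hy
    have : Fact (Module.finrank ℝ E = k + 1) := ⟨hk⟩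
    have hrank : Module.finrank ℝ (ℝ ∙ v)ᗮ = k :=
      Submodule.finrank_orthogonal_span_singleton (norm_ne_zero_iff.1 (by simp [hv]))
    rw [hunion, image_union]
    refine .union (hinter ▸ ih (by omega) ?_ ?_ hrank) (hcpt v) (hcpt (-v))
      (acyclicCompl_image_hemisphere hφ hinj hv)
      (acyclicCompl_image_hemisphere hφ hinj (by rwa [norm_neg]))
    · exact hφ.comp continuous_subtype_val.continuousOn hmaps
    · exact hinj.comp Subtype.val_injective.injOn hmaps

end Sphere

/-! ### Homology in degree zero and connectivity -/

lemma gridPoint_mono (m : ℕ) : Monotone (gridPoint m : (Fin n → ℤ) → Fin n → ℝ) :=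
  fun _ _ h i ↦ div_le_div_of_nonneg_right (Int.cast_le.2 (h i)) (by positivity)

lemma gridPoint_mem_cell (m : ℕ) (w : Fin n → ℤ) : gridPoint m (w / 2) ∈ cell m w :=
  left_mem_Icc.2 (gridPoint_mono m fun _ ↦ Int.ediv_le_ediv two_pos (Int.le_add_one le_rfl))

lemma nonempty_cell (m : ℕ) (w : Fin n → ℤ) : (cell m w).Nonempty := ⟨_, gridPoint_mem_cell m w⟩

lemma isPreconnected_cell (m : ℕ) (w : Fin n → ℤ) : IsPreconnected (cell m w) :=
  (convex_Icc _ _).isPreconnected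

lemma cell_two_mul (m : ℕ) (v : Fin n → ℤ) : cell m (2 * v) = {gridPoint m v} := by
  have hleft : 2 * v / 2 = v := by ext i; simp
  have hright : (2 * v + 1) / 2 = v := by
    ext i
    simp only [Pi.div_apply, Pi.add_apply, Pi.mul_apply, Pi.ofNat_apply]
    omega
  rw [cell, hleft, hright, Icc_self]

/-- The `0`-chain consisting of the vertex `v`. -/
def point (v : Fin n → ℤ) : CubicalChain n := Pi.single (2 * v) 1

lemma point_two_mul (v u : Fin n → ℤ) :
    point v (2 * u) = (Pi.single v 1 : CubicalChain n) u := by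
  have : 2 * u = 2 * v ↔ u = v := by
    simp only [funext_iff, Pi.mul_apply, Pi.ofNat_apply]
    exact forall_congr' fun i ↦ by omega
  simp only [point, Pi.single_apply, this]

lemma eq_two_mul_of_point_ne_zero {v w : Fin n → ℤ} (h : point v w ≠ 0) : w = 2 * v := by
  by_contra hw
  exact h (Pi.single_eq_of_ne hw 1)

lemma subdivide_pow_point (k : ℕ) (v : Fin n → ℤ) :
    (subdivide ^ k) (point v) = point (2 ^ k * v) := by
  have hsub (u : Fin n → ℤ) : subdivide (point u) = point (2 * u) := by
    ext w
    simp only [subdivide_apply, point, Pi.single_apply, ← ite_and, IsFullInParent, funext_iff,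
      ← forall_and]
    refine if_congr (forall_congr' fun i ↦ ?_) rfl rfl
    simp only [comp_apply, parent, Pi.mul_apply, Pi.ofNat_apply]
    grind
  induction k with
  | zero => simp
  | succ k ih => rw [pow_succ', Module.End.mul_apply, ih, hsub, pow_succ', mul_assoc]

lemma dim_eq_zero_iff {w : Fin n → ℤ} : dim w = 0 ↔ ∃ v, w = 2 * v := by
  simp only [dim, Finset.card_eq_zero, Finset.filter_eq_empty_iff, Finset.mem_univ, not_not,
    true_implies, funext_iff, Pi.mul_apply, Pi.ofNat_apply, even_iff_exists_two_mul]
  exact Classical.skolem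

lemma boundary_eq_zero_of_mem_homogeneous_zero {c : CubicalChain n} (hc : c ∈ homogeneous n 0) :
    boundary c = 0 := by
  ext w
  have hzero : ∀ w', IsFacet w w' → c w' = (0 : CubicalChain n) w' := fun w' hw ↦
    mem_supported.1 hc w' fun (h : dim w' = 0) ↦ by rw [hw.dim_eq] at h; omega
  rw [boundary_congr hzero, map_zero]

lemma point_mem_homogeneous (v : Fin n → ℤ) : point v ∈ homogeneous n 0 :=
  mem_supported.2 fun w hw ↦ by
    by_contra h
    exact hw (dim_eq_zero_iff.2 ⟨v, eq_two_mul_of_point_ne_zero h⟩)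

lemma point_mem_chainsOff {m : ℕ} {K : Set (Fin n → ℝ)} {v : Fin n → ℤ}
    (hv : gridPoint m v ∉ K) : point v ∈ chainsOff m K :=
  mem_chainsOff.2 fun w hw ↦ by
    rwa [eq_two_mul_of_point_ne_zero hw, cell_two_mul, disjoint_singleton_left]

lemma point_mem_cycles {m : ℕ} {K : Set (Fin n → ℝ)} {v : Fin n → ℤ} (hv : gridPoint m v ∉ K) :
    point v ∈ cycles m K :=
  mem_cycles.2 ⟨boundary_eq_zero_of_mem_homogeneous_zero (point_mem_homogeneous v),
    point_mem_chainsOff hv⟩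

lemma eventually_exists_gridPoint_mem {O : Set (Fin n → ℝ)} (hO : IsOpen O) (hne : O.Nonempty) :
    ∀ᶠ m in atTop, ∃ v, gridPoint m v ∈ O := by
  obtain ⟨x, hx⟩ := hne
  obtain ⟨r, hr, hball⟩ := Metric.isOpen_iff.1 hO x hx
  have hlim := tendsto_pow_atTop_nhds_zero_of_lt_one (r := (1 / 2 : ℝ)) (by norm_num) (by norm_num)
  filter_upwards [hlim.eventually_lt_const hr] with m hm
  exact ⟨_, hball ((dist_le_of_mem_cell (gridPoint_mem_cell m _)
    (mem_cell_cubeIndex m x)).trans_lt hm)⟩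

lemma finsum_boundary_two_mul {b : CubicalChain n} (hb : (support b).Finite) :
    ∑ᶠ v, boundary b (2 * v) = 0 := by
  have hfin (i : Fin n) (t : ℤ) : (support fun v ↦ b (2 * v + Pi.single i t)).Finite :=
    hb.preimage fun u _ v _ h ↦ by
      simpa only [add_left_inj, funext_iff, Pi.mul_apply, Pi.ofNat_apply, mul_eq_mul_left_iff,
        OfNat.ofNat_ne_zero, or_false] using h
  have hfaces (v : Fin n → ℤ) : boundary b (2 * v) =
      ∑ i, (b (2 * v + Pi.single i 1) + b (2 * v + Pi.single i (-1))) := by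
    simp only [boundary_apply, partialBoundary_apply]
    refine Finset.sum_congr rfl fun i _ ↦ ?_
    have hupdate (t : ℤ) : update (2 * v) i ((2 * v) i + t) = 2 * v + Pi.single i t := by
      ext j
      obtain rfl | hj := eq_or_ne j i <;> simp [*]
    rw [if_pos (by simp), sub_eq_add_neg, hupdate, hupdate]
  simp only [hfaces]
  rw [finsum_sum_comm _ _ fun i _ ↦ ((hfin i 1).union (hfin i (-1))).subset (support_add _ _)]
  refine Finset.sum_eq_zero fun i _ ↦ ?_
  have hshift (v : Fin n → ℤ) : 2 * v + Pi.single i 1 =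
      2 * (v + Pi.single i 1) + Pi.single i (-1) := by
    rw [mul_add, add_assoc, two_mul (Pi.single i 1), add_assoc, ← Pi.single_add]
    simp
  have hsum : ∑ᶠ v, b (2 * v + Pi.single i 1) = ∑ᶠ v, b (2 * v + Pi.single i (-1)) := by
    simp only [hshift]
    exact finsum_comp_equiv (Equiv.addRight (Pi.single i 1 : Fin n → ℤ))
      (f := fun v ↦ b (2 * v + Pi.single i (-1)))
  rw [finsum_add_distrib (hfin i 1) (hfin i (-1)), hsum, ZModModule.add_self]

section Separation

variable {m : ℕ} {U S : Set (Fin n → ℝ)}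

lemma cell_subset_of_inter_nonempty (hUS : frontier U ⊆ S) {w : Fin n → ℤ}
    (hw : Disjoint (cell m w) S) (hne : (cell m w ∩ U).Nonempty) : cell m w ⊆ U := by
  have hsub : cell m w ⊆ interior U ∪ interior Uᶜ := by
    rw [← compl_frontier_eq_union_interior]
    exact subset_compl_iff_disjoint_right.2 (hw.mono_right hUS)
  have hint : (cell m w ∩ interior U).Nonempty := hne.imp fun x ⟨hx, hxU⟩ ↦
    ⟨hx, (hsub hx).resolve_right fun h ↦ interior_subset h hxU⟩
  exact ((isPreconnected_cell m w).subset_left_of_subset_union isOpen_interior isOpen_interior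
    (disjoint_compl_right.mono interior_subset interior_subset) hsub hint).trans interior_subset

lemma boundary_indicator_cell_subset (hUS : frontier U ⊆ S) {b : CubicalChain n}
    (hb : b ∈ chainsOff m S) :
    boundary ({w | cell m w ⊆ U}.indicator b) = {w | cell m w ⊆ U}.indicator (boundary b) := by
  ext w
  by_cases hw : cell m w ⊆ U
  · rw [indicator_of_mem hw]
    refine boundary_congr fun w' hww' ↦ indicator_apply_eq_self.2 fun hw' ↦ ?_
    by_contra hbw'
    obtain ⟨x, hx⟩ := nonempty_cell m w
    exact hw' (cell_subset_of_inter_nonempty hUS (mem_chainsOff.1 hb w' hbw')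
      ⟨x, hww'.cell_subset m hx, hw hx⟩)
  · have hzero : ∀ w', IsFacet w w' →
        {w | cell m w ⊆ U}.indicator b w' = (0 : CubicalChain n) w' := fun w' hww' ↦
      indicator_of_notMem (s := {w | cell m w ⊆ U})
        (fun hw' ↦ hw ((hww'.cell_subset m).trans hw')) b
    rw [indicator_of_notMem hw, boundary_congr hzero, map_zero, Pi.zero_apply]

lemma boundary_ne_point_add (hU : Bornology.IsBounded U) (hUS : frontier U ⊆ S)
    {b c : CubicalChain n} (hb : b ∈ chainsOff m S) {v : Fin n → ℤ} (hv : gridPoint m v ∈ U)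
    (hc : c ∈ chainsOff m U) : boundary b ≠ point v + c := by
  intro h
  have hfin : (support ({w | cell m w ⊆ U}.indicator b)).Finite := by
    refine (finite_setOf_not_disjoint_cell m hU).subset fun w hw ↦ ?_
    have hwU : cell m w ⊆ U := mem_of_indicator_ne_zero hw
    exact not_disjoint_iff.2 ((nonempty_cell m w).imp fun x hx ↦ ⟨hx, hwU hx⟩)
  have hpoint : {w | cell m w ⊆ U}.indicator (point v) = point v :=
    indicator_eq_self.2 fun w hw ↦ by
      rwa [eq_two_mul_of_point_ne_zero hw, mem_ofPred_eq, cell_two_mul, singleton_subset_iff]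
  have hzero : {w | cell m w ⊆ U}.indicator c = 0 := by
    refine indicator_eq_zero.2 (disjoint_left.2 fun w hcw hw ↦ ?_)
    obtain ⟨x, hx⟩ := nonempty_cell m w
    exact disjoint_left.1 (mem_chainsOff.1 hc w hcw) hx (hw hx)
  have hsum := finsum_boundary_two_mul hfin
  rw [boundary_indicator_cell_subset hUS hb, h, indicator_add', hpoint, hzero, add_zero] at hsum
  simp only [point_two_mul] at hsum
  rw [finsum_eq_single _ v fun u hu ↦ Pi.single_eq_of_ne hu 1, Pi.single_eq_same] at hsum
  exact one_ne_zero hsum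

lemma point_add_notMem_boundaries (hU : Bornology.IsBounded U) (hUS : frontier U ⊆ S)
    {c : CubicalChain n} {v : Fin n → ℤ} (hv : gridPoint m v ∈ U) (hc : c ∈ chainsOff m U) :
    point v + c ∉ boundaries m S := by
  intro h
  obtain ⟨k, b, hb, hbv⟩ := mem_boundaries.1 h
  rw [map_add, subdivide_pow_point] at hbv
  exact boundary_ne_point_add hU hUS hb (by rwa [gridPoint_add_two_pow_mul])
    (subdivide_pow_mem_chainsOff hc k) hbv

theorem AcyclicCompl.eq_empty_of_frontier_subset (hS : AcyclicCompl S) (hU : IsOpen U)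
    (hbdd : Bornology.IsBounded U) (hUS : frontier U ⊆ S) (hdisj : Disjoint U S) : U = ∅ := by
  by_contra hne
  obtain ⟨m, v, hv⟩ :=
    (eventually_exists_gridPoint_mem hU (nonempty_iff_ne_empty.2 hne)).exists
  refine point_add_notMem_boundaries hbdd hUS hv (zero_mem _) ?_
  rw [add_zero]
  exact hS m (point_mem_cycles (disjoint_left.1 hdisj hv))

theorem SphericalCompl.not_disjoint {d : ℕ} {V : Set (Fin n → ℝ)} (hS : SphericalCompl S d)
    (hU : IsOpen U) (hUbdd : Bornology.IsBounded U) (hUS : frontier U ⊆ S) (hUne : U.Nonempty)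
    (hUdisj : Disjoint U S) (hV : IsOpen V) (hVbdd : Bornology.IsBounded V)
    (hVS : frontier V ⊆ S) (hVne : V.Nonempty) (hVdisj : Disjoint V S) : ¬ Disjoint U V := by
  intro hUV
  obtain ⟨m, g, hg⟩ := hS
  obtain ⟨l, hml, ⟨u, hu⟩, v, hv⟩ := ((eventually_ge_atTop m).and
    ((eventually_exists_gridPoint_mem hU hUne).and
      (eventually_exists_gridPoint_mem hV hVne))).exists
  obtain ⟨k, rfl⟩ := Nat.exists_eq_add_of_le hml
  have hu' := hg.mem_boundaries_or k _ (point_mem_cycles (disjoint_left.1 hUdisj hu))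
  have hv' := hg.mem_boundaries_or k _ (point_mem_cycles (disjoint_left.1 hVdisj hv))
  have hunot := point_add_notMem_boundaries hUbdd hUS hu (zero_mem _)
  have hvnot := point_add_notMem_boundaries hVbdd hVS hv (zero_mem _)
  rw [add_zero] at hunot hvnot
  have hsum := add_mem (hu'.resolve_left hunot) (hv'.resolve_left hvnot)
  rw [add_add_add_comm, ZModModule.add_self, add_zero] at hsum
  exact point_add_notMem_boundaries hUbdd hUS hu
    (point_mem_chainsOff (disjoint_right.1 hUV hv)) hsum

end Separation

lemma push_mem_homogeneous {d : ℕ} {c : CubicalChain n} (hc : c ∈ homogeneous n d) (i : Fin n)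
    (q : Fin n → ℤ) : push i q c ∈ homogeneous n (d + 1) := by
  refine mem_supported.2 fun w hw ↦ ?_
  rw [push_apply]
  split_ifs with hi
  · rfl
  · refine Finset.sum_eq_zero fun b _ ↦ mem_supported.1 hc _ fun (hb : dim _ = d) ↦ hw ?_
    have := dim_update (w := update w i (2 * b)) (i := i) (by simp) hi
    rwa [update_idem, update_eq_self, hb] at this

lemma boundary_push_of_mem_homogeneous_zero {c : CubicalChain n} (hc : c ∈ homogeneous n 0)
    (i : Fin n) (q : Fin n → ℤ) : boundary (push i q c) = c := by
  have hproj : project {i} q c = 0 := by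
    ext w
    refine ite_eq_right_iff.2 fun _ ↦ mem_supported.1 hc _ fun hdim ↦ ?_
    obtain ⟨v, hv⟩ := dim_eq_zero_iff.1 hdim
    have := congrFun hv i
    simp only [Finset.piecewise_singleton, update_self, Pi.add_apply, Pi.mul_apply,
      Pi.ofNat_apply] at this
    omega
  simpa [boundary_eq_zero_of_mem_homogeneous_zero hc, hproj] using
    boundary_push_add_push_boundary i q c

lemma finite_support_boundary {c : CubicalChain n} (hc : (support c).Finite) :
    (support (boundary c)).Finite := by
  let T : Set (Fin n → ℤ) := ⋃ w' ∈ support c, {w | ¬ Disjoint (cell 0 w) (cell 0 w')}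
  have hT : T.Finite := hc.biUnion fun w' _ ↦
    finite_setOf_not_disjoint_cell 0 (Metric.isBounded_Icc _ _)
  refine hT.subset (support_subset_iff'.2 (mem_supported.1 (boundary_mem_supported
    (T := support c) (fun w w' hww' hw' ↦ mem_biUnion hw' ?_) (mem_supported.2 (by simp)))))
  obtain ⟨x, hx⟩ := nonempty_cell 0 w
  exact not_disjoint_iff.2 ⟨x, hx, hww'.cell_subset 0 hx⟩

lemma partialBoundary_single (i : Fin n) (u : Fin n → ℤ) :
    partialBoundary i (Pi.single u 1) = if Even (u i) then 0 else
      Pi.single (update u i (u i - 1)) 1 + Pi.single (update u i (u i + 1)) 1 := by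
  ext w
  have hup : update w i (w i + 1) = u ↔ w = update u i (u i - 1) := by
    rw [update_eq_iff, eq_update_iff]
    grind
  have hdown : update w i (w i - 1) = u ↔ w = update u i (u i + 1) := by
    rw [update_eq_iff, eq_update_iff]
    grind
  have hparity {z : ℤ} (h : Even (w i) ↔ ¬ Even z) : w ≠ update u i z := by
    rintro rfl
    simp [-Int.not_even_iff_odd] at h
  rw [partialBoundary_apply]
  simp only [Pi.single_apply, hup, hdown]
  by_cases hw : Even (w i) <;> by_cases hu : Even (u i)
  · simp [hw, hu, hparity (z := u i - 1) (by grind), hparity (z := u i + 1) (by grind)]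
  · simp [hw, hu, Pi.single_apply]
  · simp [hw, hu]
  · simp [hw, hu, hparity (z := u i - 1) (by grind), hparity (z := u i + 1) (by grind)]

section Covering

variable {v v' : Fin n → ℤ}

lemma boundary_single_add_of_covBy (h : v ⋖ v') :
    boundary (Pi.single (v + v') 1) = point v + point v' := by
  obtain ⟨i, x, hx, rfl⟩ := Pi.covBy_iff_exists_right_eq.1 h
  obtain rfl := Order.covBy_iff_add_one_eq.1 hx
  set u := v + update v i (v i + 1) with hu
  have hui : u i = 2 * v i + 1 := by simp only [hu, Pi.add_apply, update_self]; ring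
  have huj (j : Fin n) (hj : j ≠ i) : u j = 2 * v j := by simp [hu, hj, two_mul]
  have hdown : update u i (u i - 1) = 2 * v :=
    update_eq_iff.2 ⟨by simp [hui], fun j hj ↦ by simp [huj j hj]⟩
  have hup : update u i (u i + 1) = 2 * update v i (v i + 1) :=
    update_eq_iff.2 ⟨by simp [hui]; ring, fun j hj ↦ by simp [huj j hj, hj]⟩
  have hodd : ¬ Even (u i) := by simp [hui]
  rw [boundary, LinearMap.sum_apply, Finset.sum_eq_single i, partialBoundary_single, if_neg hodd,
    hdown, hup]
  · rfl
  · exact fun j _ hj ↦ by rw [partialBoundary_single, if_pos (by simp [huj j hj])]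
  · simp

lemma cell_add_of_covBy (h : v ⋖ v') (m : ℕ) :
    cell m (v + v') = Icc (gridPoint m v) (gridPoint m v') := by
  obtain ⟨i, hi, hne⟩ := Pi.covBy_iff.1 h
  rw [Order.covBy_iff_add_one_eq] at hi
  have hhalf (j : Fin n) : (v j + v' j) / 2 = v j ∧ (v j + v' j + 1) / 2 = v' j := by
    obtain rfl | hj := eq_or_ne j i
    · omega
    · have := hne j hj
      omega
  rw [cell, show (v + v') / 2 = v from funext fun j ↦ (hhalf j).1,
    show (v + v' + 1) / 2 = v' from funext fun j ↦ (hhalf j).2]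

end Covering

section Connectivity

variable {m : ℕ} {S : Set (Fin n → ℝ)} {v v' : Fin n → ℤ}

lemma point_add_point_mem_boundaries_of_le (h : v ≤ v')
    (hS : Disjoint (Icc (gridPoint m v) (gridPoint m v')) S) :
    point v + point v' ∈ boundaries m S := by
  rw [le_iff_reflTransGen_covBy] at h
  induction h using Relation.ReflTransGen.head_induction_on with
  | refl => simp [ZModModule.add_self]
  | head hvu huv' ih =>
    rename_i v u
    have huv' := le_iff_reflTransGen_covBy.2 huv'
    have hedge : point v + point u ∈ boundaries m S := by
      rw [← boundary_single_add_of_covBy hvu]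
      refine boundary_mem_boundaries (mem_chainsOff.2 fun w hw ↦ ?_)
      obtain rfl : w = v + u := by
        by_contra hne
        exact hw (Pi.single_eq_of_ne hne 1)
      rw [cell_add_of_covBy hvu]
      exact hS.mono_left (Icc_subset_Icc_right (gridPoint_mono m huv'))
    have hrest := ih (hS.mono_left (Icc_subset_Icc_left (gridPoint_mono m hvu.le)))
    rw [← ZModModule.add_add_add_cancel _ (point u)]
    exact add_mem hedge hrest

lemma point_add_point_mem_boundaries_of_mem_Icc {a b : Fin n → ℝ} (hS : Disjoint (Icc a b) S)
    (hv : gridPoint m v ∈ Icc a b) (hv' : gridPoint m v' ∈ Icc a b) :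
    point v + point v' ∈ boundaries m S := by
  have ha : a ≤ gridPoint m (v ⊓ v') := fun i ↦ by
    have := min_div_div_right (show (0 : ℝ) ≤ 2 ^ m by positivity) (v i) (v' i)
    simpa [gridPoint, this] using le_inf (hv.1 i) (hv'.1 i)
  have hinf := add_mem
    (point_add_point_mem_boundaries_of_le inf_le_left (hS.mono_left (Icc_subset_Icc ha hv.2)))
    (point_add_point_mem_boundaries_of_le inf_le_right (hS.mono_left (Icc_subset_Icc ha hv'.2)))
  rwa [add_comm (point _) (point v), ZModModule.add_add_add_cancel] at hinf

lemma exists_mem_nhds_point_add_point_mem_boundaries (hS : IsClosed S) {x : Fin n → ℝ}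
    (hx : x ∉ S) : ∃ O ∈ 𝓝 x, ∀ m v v', gridPoint m v ∈ O → gridPoint m v' ∈ O →
      point v + point v' ∈ boundaries m S := by
  obtain ⟨r, hr, hball⟩ := Metric.nhds_basis_closedBall.mem_iff.1 (hS.isOpen_compl.mem_nhds hx)
  refine ⟨Metric.closedBall x r, Metric.closedBall_mem_nhds x hr, fun m v v' hv hv' ↦ ?_⟩
  have hbox : Metric.closedBall x r = Icc (fun i ↦ x i - r) (fun i ↦ x i + r) := by
    simp only [closedBall_pi x hr.le, Real.closedBall_eq_Icc, pi_univ_Icc]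
  rw [hbox] at hv hv' hball
  exact point_add_point_mem_boundaries_of_mem_Icc (subset_compl_iff_disjoint_right.1 hball) hv hv'

lemma point_mem_boundaries_of_lt (i : Fin n) (hS : ∀ x ∈ S, x i < gridPoint m v i) :
    point v ∈ boundaries m S := by
  rw [← boundary_push_of_mem_homogeneous_zero (point_mem_homogeneous v) i (v - 1)]
  refine boundary_mem_boundaries (mem_chainsOff.2 fun w hw ↦ disjoint_left.2 fun x hx hxS ↦ ?_)
  rw [push_apply] at hw
  split_ifs at hw
  · exact hw rfl
  · obtain ⟨b, hb, hbw⟩ := Finset.exists_ne_zero_of_sum_ne_zero hw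
    have hbv : 2 * b = 2 * v i := by
      simpa using congrFun (eq_two_mul_of_point_ne_zero hbw) i
    rw [Finset.mem_Ioc, Pi.sub_apply, Pi.one_apply] at hb
    have hle : v i ≤ w i / 2 := by grind
    have hgrid : gridPoint m v i ≤ gridPoint m (w / 2) i :=
      div_le_div_of_nonneg_right (Int.cast_le.2 hle) (by positivity)
    exact (hS x hxS).not_ge (hgrid.trans (hx.1 i))

lemma point_mem_boundaries_of_isPreconnected_compl (hn : 0 < n) (hS : IsCompact S)
    (hconn : IsPreconnected Sᶜ) (hv : gridPoint m v ∉ S) : point v ∈ boundaries m S := by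
  let B : Set (Fin n → ℝ) := {x | ∀ᶠ y in 𝓝 x, ∀ m v, gridPoint m v = y → point v ∈ boundaries m S}
  suffices h : Sᶜ ⊆ B from (h hv).self_of_nhds m v rfl
  refine hconn.subset_of_closure_inter_subset isOpen_setOfPred_eventually_nhds ?_ ?_
  · let i : Fin n := ⟨0, hn⟩
    obtain ⟨R, hR⟩ := (hS.image (continuous_apply i)).bddAbove
    have hlt : ∀ x ∈ S, x i < R + 1 := fun x hx ↦
      (hR (mem_image_of_mem _ hx)).trans_lt (lt_add_one R)
    refine ⟨fun _ ↦ R + 2, fun h ↦ by linarith [hlt _ h], ?_⟩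
    have hcont : Continuous fun y : Fin n → ℝ ↦ y i := continuous_apply i
    filter_upwards [hcont.continuousAt.eventually_const_lt (show R + 1 < R + 2 by linarith)]
    rintro _ hy m v rfl
    exact point_mem_boundaries_of_lt i fun x hx ↦ (hlt x hx).trans hy
  · rintro x ⟨hxB, hxS⟩
    obtain ⟨O, hO, hpair⟩ := exists_mem_nhds_point_add_point_mem_boundaries hS.isClosed hxS
    obtain ⟨y, hyO, hyB⟩ := mem_closure_iff_nhds.1 hxB _ (interior_mem_nhds.2 hO)
    obtain ⟨V, hVB, hV, hyV⟩ := eventually_nhds_iff.1 hyB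
    filter_upwards [hO]
    rintro _ hmO m v rfl
    obtain ⟨l, hml, u, huO, huV⟩ := ((eventually_ge_atTop m).and (eventually_exists_gridPoint_mem
      (isOpen_interior.inter hV) ⟨y, hyO, hyV⟩)).exists
    obtain ⟨k, rfl⟩ := Nat.exists_eq_add_of_le hml
    have hsum := add_mem (hpair (m + k) (2 ^ k * v) u (by rwa [gridPoint_add_two_pow_mul])
      (interior_subset huO)) (hVB _ huV _ u rfl)
    rwa [add_assoc, ZModModule.add_self, add_zero, ← subdivide_pow_point,
      subdivide_pow_mem_boundaries_iff] at hsum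

lemma mem_boundaries_of_finite_support (hpoint : ∀ v, gridPoint m v ∉ S → point v ∈ boundaries m S)
    {c : CubicalChain n} (hc : c ∈ homogeneous n 0) (hS : c ∈ chainsOff m S)
    (hfin : (support c).Finite) : c ∈ boundaries m S := by
  have hsum : c = ∑ w ∈ hfin.toFinset, Pi.single w (c w) := by
    ext u
    simp [Finset.sum_apply, Finset.sum_pi_single]
  rw [hsum]
  refine sum_mem fun w hw ↦ ?_
  rw [Finite.mem_toFinset] at hw
  obtain ⟨v, rfl⟩ : ∃ v, w = 2 * v := dim_eq_zero_iff.1 <| by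
    by_contra h
    exact hw (mem_supported.1 hc w h)
  have hv : gridPoint m v ∉ S := by
    simpa [cell_two_mul] using mem_chainsOff.1 hS _ hw
  have hsmul : Pi.single (2 * v) (c (2 * v)) = c (2 * v) • point v := by
    simp [point, ← Pi.single_smul]
  exact hsmul ▸ Submodule.smul_mem _ _ (hpoint v hv)

theorem mem_boundaries_of_isPreconnected_compl (hn : 0 < n) (hS : IsCompact S)
    (hconn : IsPreconnected Sᶜ) {g : CubicalChain n} (hg : g ∈ homogeneous n 0)
    (hgS : g ∈ chainsOff m S) : g ∈ boundaries m S := by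
  let T : Set (Fin n → ℤ) := {w | Disjoint (cell m w) S}
  let e := push ⟨0, hn⟩ 0 g
  have he : boundary e = g := boundary_push_of_mem_homogeneous_zero hg _ 0
  have heS : T.indicator e ∈ chainsOff m S ⊓ homogeneous n 1 := by
    rw [chainsOff, homogeneous, ← supported_inter]
    exact indicator_mem_supported_inter (push_mem_homogeneous hg _ 0)
  have hfin : (support (Tᶜ.indicator e)).Finite :=
    (finite_setOf_not_disjoint_cell m hS.isBounded).subset support_indicator_subset
  have hsplit : g + boundary (T.indicator e) = boundary (Tᶜ.indicator e) := by
    nth_rw 1 [← he, ← indicator_self_add_compl T e]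
    rw [map_add, add_right_comm, ZModModule.add_self, zero_add]
  have hbound : g + boundary (T.indicator e) ∈ boundaries m S := by
    refine mem_boundaries_of_finite_support
      (fun v ↦ point_mem_boundaries_of_isPreconnected_compl hn hS hconn)
      (add_mem hg (boundary_mem_homogeneous heS.2)) (add_mem hgS (boundary_mem_chainsOff heS.1)) ?_
    exact hsplit ▸ finite_support_boundary hfin
  have := add_mem hbound (boundary_mem_boundaries heS.1)
  rwa [add_assoc, ZModModule.add_self, add_zero] at this

theorem SphericalCompl.not_isPreconnected_compl (h : SphericalCompl S 0) (hn : 0 < n)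
    (hS : IsCompact S) : ¬ IsPreconnected Sᶜ := by
  obtain ⟨m, g, hg⟩ := h
  exact fun hconn ↦ hg.notMem_boundaries
    (mem_boundaries_of_isPreconnected_compl hn hS hconn hg.mem_homogeneous hg.mem_cycles.2)

end Connectivity

end CubicalChain

/-! ### Jordan separation -/

section Topology

open Bornology Metric Set

variable {X : Type*} [TopologicalSpace X]
variable {E F : Type*} [NormedAddCommGroup E] [NormedSpace ℝ E] [NormedAddCommGroup F]
  [NormedSpace ℝ F]

lemma isConnected_setOf_lt_norm (hE : 1 < Module.rank ℝ E) {R : ℝ} (hR : 0 ≤ R) :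
    IsConnected {x : E | R < ‖x‖} := by
  have himage : (fun p : ℝ × E ↦ p.1 • p.2) '' (Ioi R ×ˢ sphere 0 1) = {x : E | R < ‖x‖} := by
    ext x
    constructor
    · rintro ⟨⟨r, y⟩, ⟨hr, hy⟩, rfl⟩
      rw [mem_sphere_zero_iff_norm] at hy
      simpa [norm_smul, hy] using lt_of_lt_of_le hr (le_abs_self r)
    · intro hx
      have hx0 : ‖x‖ ≠ 0 := (hR.trans_lt hx).ne'
      exact ⟨(‖x‖, ‖x‖⁻¹ • x), ⟨hx, by simp [norm_smul, hx0]⟩, smul_inv_smul₀ hx0 x⟩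
  rw [← himage]
  exact (isConnected_Ioi.prod (isConnected_sphere hE 0 zero_le_one)).image _ (by fun_prop)

lemma isOpen_sdiff_connectedComponentIn [LocallyConnectedSpace X] {W : Set X}
    (hW : IsOpen W) (x : X) : IsOpen (W \ connectedComponentIn W x) := by
  refine isOpen_iff_forall_mem_open.2 fun y ⟨hy, hyx⟩ ↦
    ⟨connectedComponentIn W y, fun z hz ↦ ⟨connectedComponentIn_subset _ _ hz, fun hzx ↦ hyx ?_⟩,
      hW.connectedComponentIn, mem_connectedComponentIn hy⟩
  rw [connectedComponentIn_eq hzx, ← connectedComponentIn_eq hz]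
  exact mem_connectedComponentIn hy

lemma exists_isConnected_isBounded_compl (hE : 1 < Module.rank ℝ E) {S : Set E}
    (hS : IsClosed S) (hbdd : IsBounded S) :
    ∃ U V, IsOpen U ∧ IsOpen V ∧ IsConnected V ∧ Disjoint U V ∧ U ∪ V = Sᶜ ∧
      IsBounded Vᶜ := by
  obtain ⟨R, hR, hSR⟩ := hbdd.subset_closedBall_lt 0 0
  have hext : {x : E | R < ‖x‖} ⊆ Sᶜ := fun x hx hxS ↦
    hx.not_ge (mem_closedBall_zero_iff.1 (hSR hxS))
  obtain ⟨⟨x, hx⟩, hconn⟩ := isConnected_setOf_lt_norm hE hR.le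
  have hV := hconn.subset_connectedComponentIn hx hext
  refine ⟨Sᶜ \ connectedComponentIn Sᶜ x, connectedComponentIn Sᶜ x,
    isOpen_sdiff_connectedComponentIn hS.isOpen_compl x,
    hS.isOpen_compl.connectedComponentIn,
    isConnected_connectedComponentIn_iff.2 (hext hx), disjoint_sdiff_left,
    sdiff_union_of_subset (connectedComponentIn_subset _ _),
    (isBounded_closedBall (x := (0 : E)) (r := R)).subset fun y hy ↦ ?_⟩
  exact mem_closedBall_zero_iff.2 (not_lt.1 fun h ↦ hy (hV h))

lemma frontier_subset_compl_union {A B : Set X} (hA : IsOpen A) (hB : IsOpen B)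
    (hAB : Disjoint A B) : frontier A ⊆ (A ∪ B)ᶜ := by
  rw [hA.frontier_eq, compl_union]
  exact fun x hx ↦ ⟨hx.2, disjoint_left.1 (hAB.closure_left hB) hx.1⟩

/-- The set `S` separates the space as a Jordan curve separates the plane: its complement splits
into a bounded and an unbounded connected open set, each of which has `S` as its frontier. -/
def JordanSeparates [Bornology X] (S : Set X) : Prop :=
  ∃ U V, IsOpen U ∧ IsOpen V ∧ IsConnected U ∧ IsConnected V ∧ Disjoint U V ∧ U ∪ V = Sᶜ ∧
    IsBounded U ∧ ¬ IsBounded V ∧ frontier U = S ∧ frontier V = S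

lemma JordanSeparates.preimage {S : Set F} (hS : JordanSeparates S) (e : E ≃L[ℝ] F) :
    JordanSeparates (e ⁻¹' S) := by
  obtain ⟨U, V, hU, hV, hUc, hVc, hUV, hunion, hUb, hVb, hUS, hVS⟩ := hS
  refine ⟨e ⁻¹' U, e ⁻¹' V, hU.preimage e.continuous, hV.preimage e.continuous,
    e.toHomeomorph.isConnected_preimage.2 hUc, e.toHomeomorph.isConnected_preimage.2 hVc,
    hUV.preimage e, by rw [← preimage_union, hunion, preimage_compl],
    e.antilipschitz.isBounded_preimage hUb, fun h ↦ hVb ?_,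
    by rw [← hUS]; exact (e.toHomeomorph.preimage_frontier U).symm,
    by rw [← hVS]; exact (e.toHomeomorph.preimage_frontier V).symm⟩
  rw [← e.surjective.image_preimage V]
  exact e.lipschitz.isBounded_image h

end Topology

namespace CubicalChain

open Function Metric Set

variable {n : ℕ} {S : Set (Fin n → ℝ)}

lemma SphericalCompl.isPreconnected {d : ℕ} (hS : SphericalCompl S d) {U : Set (Fin n → ℝ)}
    (hU : IsOpen U) (hbdd : Bornology.IsBounded U) (hUS : frontier U ⊆ S) (hdisj : Disjoint U S) :
    IsPreconnected U := by
  intro u v hu hv huv hUu hUv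
  by_contra hUuv
  have hdisj' : Disjoint (U ∩ u) (U ∩ v) := disjoint_left.2 fun x hxu hxv ↦
    hUuv ⟨x, hxu.1, hxu.2, hxv.2⟩
  have hfrontier {A B : Set (Fin n → ℝ)} (hA : IsOpen A) (hB : IsOpen B) (hAB : Disjoint A B)
      (hunion : A ∪ B = U) : frontier A ⊆ S := by
    refine fun x hx ↦ hUS ?_
    rw [hU.frontier_eq]
    refine ⟨closure_mono (hunion ▸ subset_union_left) hx.1,
      hunion ▸ frontier_subset_compl_union hA hB hAB hx⟩
  have hunion : U ∩ u ∪ U ∩ v = U := by rw [← inter_union_distrib_left, inter_eq_left.2 huv]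
  exact hS.not_disjoint (hU.inter hu) (hbdd.subset inter_subset_left)
    (hfrontier (hU.inter hu) (hU.inter hv) hdisj' hunion) hUu (hdisj.mono_left inter_subset_left)
    (hU.inter hv) (hbdd.subset inter_subset_left)
    (hfrontier (hU.inter hv) (hU.inter hu) hdisj'.symm (union_comm _ _ ▸ hunion)) hUv
    (hdisj.mono_left inter_subset_left) hdisj'

lemma AcyclicCompl.union_closure_eq_univ {D V : Set (Fin n → ℝ)} (hD : AcyclicCompl D)
    (hDc : IsClosed D) (hbdd : Bornology.IsBounded Vᶜ) (hVD : frontier V ⊆ D) :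
    D ∪ closure V = univ := by
  refine compl_empty_iff.1 (hD.eq_empty_of_frontier_subset (hDc.union isClosed_closure).isOpen_compl
    (hbdd.subset (compl_subset_compl.2 (subset_closure.trans subset_union_right))) ?_
    (disjoint_compl_left_iff_subset.2 subset_union_left))
  rw [frontier_compl]
  refine (frontier_union_subset _ _).trans (union_subset
    (inter_subset_left.trans hDc.frontier_subset)
    (inter_subset_right.trans (frontier_closure_subset.trans hVD)))

theorem SphericalCompl.jordanSeparates (h : SphericalCompl S 0) (hn : 2 ≤ n) (hS : IsCompact S)
    (hloc : ∀ T ⊂ S, IsClosed T → ∃ D ⊆ S, T ⊆ D ∧ IsClosed D ∧ AcyclicCompl D) :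
    JordanSeparates S := by
  have hrank : 1 < Module.rank ℝ (Fin n → ℝ) := by
    rw [rank_fin_fun]
    exact_mod_cast hn
  have : Nontrivial (Fin n → ℝ) := rank_pos_iff_nontrivial.1 (zero_lt_one.trans hrank)
  obtain ⟨U, V, hU, hV, hVconn, hUV, hunion, hVbdd⟩ :=
    exists_isConnected_isBounded_compl hrank hS.isClosed hS.isBounded
  have hUS : frontier U ⊆ S := by
    simpa [hunion] using frontier_subset_compl_union hU hV hUV
  have hVS : frontier V ⊆ S := by
    simpa [union_comm V, hunion] using frontier_subset_compl_union hV hU hUV.symm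
  have hUdisj : Disjoint U S := subset_compl_iff_disjoint_right.1 (hunion ▸ subset_union_left)
  have hUbdd : Bornology.IsBounded U := hVbdd.subset (subset_compl_iff_disjoint_right.2 hUV)
  have hUne : U.Nonempty := by
    refine nonempty_iff_ne_empty.2 fun hempty ↦ h.not_isPreconnected_compl (by omega) hS ?_
    rw [← hunion, hempty, empty_union]
    exact hVconn.isPreconnected
  refine ⟨U, V, hU, hV, ⟨hUne, h.isPreconnected hU hUbdd hUS hUdisj⟩, hVconn, hUV, hunion, hUbdd,
    fun hVb ↦ NormedSpace.unbounded_univ ℝ (Fin n → ℝ) (union_compl_self V ▸ hVb.union hVbdd),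
    ?_, ?_⟩
  · by_contra hne
    obtain ⟨D, hDS, hUD, -, hD⟩ := hloc _ (hUS.ssubset_of_ne hne) isClosed_frontier
    exact hUne.ne_empty (hD.eq_empty_of_frontier_subset hU hUbdd hUD (hUdisj.mono_right hDS))
  · by_contra hne
    obtain ⟨D, hDS, hVD, hDc, hD⟩ := hloc _ (hVS.ssubset_of_ne hne) isClosed_frontier
    obtain ⟨x, hx⟩ := hUne
    obtain hxD | hxV : x ∈ D ∪ closure V := hD.union_closure_eq_univ hDc hVbdd hVD ▸ mem_univ x
    · exact disjoint_left.1 hUdisj hx (hDS hxD)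
    · exact disjoint_left.1 (hUV.closure_right hU) hx hxV

section Sphere

variable {E : Type*} [NormedAddCommGroup E] [InnerProductSpace ℝ E] [FiniteDimensional ℝ E]
  {f : sphere (0 : E) 1 → Fin n → ℝ}

lemma exists_acyclicCompl_of_ssubset_range (hf : Continuous f) (hinj : Injective f)
    {T : Set (Fin n → ℝ)} (hTf : T ⊂ range f) (hT : IsClosed T) :
    ∃ D ⊆ range f, T ⊆ D ∧ IsClosed D ∧ AcyclicCompl D := by
  obtain ⟨-, ⟨v, rfl⟩, hv⟩ := exists_of_ssubset hTf
  let p := stereographic (norm_eq_of_mem_sphere v)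
  have hK : IsCompact (f ⁻¹' T) := (hT.preimage hf).isCompact
  have hKp : f ⁻¹' T ⊆ p.source := subset_compl_singleton_iff.2 hv
  obtain ⟨R, hR, hKR⟩ := (hK.image_of_continuousOn (p.continuousOn.mono hKp)).isBounded
    |>.subset_closedBall_lt 0 0
  have hcont : ContinuousOn (f ∘ p.symm) (closedBall 0 R) :=
    hf.comp_continuousOn (p.continuousOn_symm.mono (subset_univ _))
  refine ⟨f ∘ p.symm '' closedBall 0 R, ?_, ?_, ?_, acyclicCompl_image_convex
    (isCompact_closedBall _ _) (convex_closedBall _ _) (nonempty_closedBall.2 hR.le) hcont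
    (hinj.comp_injOn (p.symm.injOn.mono (subset_univ _)))⟩
  · exact (image_subset_range _ _).trans (range_comp_subset_range _ _)
  · intro x hx
    obtain ⟨y, rfl⟩ := hTf.subset hx
    exact ⟨p y, hKR (mem_image_of_mem p hx), congrArg f (p.left_inv (hKp hx))⟩
  · exact ((isCompact_closedBall _ _).image_of_continuousOn hcont).isClosed

theorem jordanSeparates_range (hE : Module.finrank ℝ E = n) (hn : 2 ≤ n) (hf : Continuous f)
    (hinj : Injective f) : JordanSeparates (range f) := by
  let φ : E → Fin n → ℝ := extend Subtype.val f 0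
  have hφf : φ ∘ Subtype.val = f := extend_comp Subtype.val_injective f 0
  have hcont : ContinuousOn φ (sphere 0 1) := continuousOn_iff_continuous_domRestrict.2 <| by
    rwa [domRestrict_eq, hφf]
  have hinj' : InjOn φ (sphere 0 1) := injOn_iff_injective.2 <| by
    rwa [domRestrict_eq, hφf]
  have hrange : φ '' sphere 0 1 = range f := by
    rw [← hφf, range_comp, Subtype.range_val]
  have hsph := sphericalCompl_image_sphere (d := 0) (by omega) hcont hinj'
  rw [hrange] at hsph
  exact hsph.jordanSeparates hn (isCompact_range hf)
    fun T hTf hT ↦ exists_acyclicCompl_of_ssubset_range hf hinj hTf hT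

end Sphere

end CubicalChain

theorem jordan_brouwer_separation_general {E F : Type*} [NormedAddCommGroup E]
    [InnerProductSpace ℝ E] [NormedAddCommGroup F] [NormedSpace ℝ F]
    (hEF : Module.finrank ℝ E = Module.finrank ℝ F) (hF : 2 ≤ Module.finrank ℝ F)
    {f : Metric.sphere (0 : E) 1 → F} (hf : Continuous f) (hinj : Function.Injective f) :
    JordanSeparates (Set.range f) := by
  have : FiniteDimensional ℝ E := Module.finite_of_finrank_pos (by omega)
  have : FiniteDimensional ℝ F := Module.finite_of_finrank_pos (by omega)
  let e : F ≃L[ℝ] (Fin (Module.finrank ℝ F) → ℝ) :=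
    ContinuousLinearEquiv.ofFinrankEq (by simp)
  have hsep := CubicalChain.jordanSeparates_range hEF hF (e.continuous.comp hf)
    (e.injective.comp hinj)
  have := hsep.preimage e
  rwa [Set.range_comp, Set.preimage_image_eq _ e.injective] at this

/-- **The Jordan–Brouwer separation theorem.** For `n ≥ 2`, if `Σ` is the image of a
continuous injective map from the unit sphere `S^{n-1} ⊆ ℝⁿ` into `ℝⁿ`, then `ℝⁿ \ Σ`
has exactly two connected components, one bounded and one unbounded, and `Σ` is the
frontier of each of them. -/
theorem jordan_brouwer_separation (n : ℕ) (hn : 2 ≤ n)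
    (S : Set (EuclideanSpace ℝ (Fin n)))
    (f : Metric.sphere (0 : EuclideanSpace ℝ (Fin n)) 1 → EuclideanSpace ℝ (Fin n))
    (hf : Continuous f) (hinj : Function.Injective f) (hS : S = Set.range f) :
    ∃ U V : Set (EuclideanSpace ℝ (Fin n)),
      IsOpen U ∧ IsOpen V ∧ IsConnected U ∧ IsConnected V ∧
      Disjoint U V ∧ U ∪ V = Sᶜ ∧
      Bornology.IsBounded U ∧ ¬ Bornology.IsBounded V ∧
      frontier U = S ∧ frontier V = S := by
  subst hS
  exact jordan_brouwer_separation_general rfl (by simpa using hn) hf hinj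
end
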